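/- Let n ≥ 2 be an integer, r > 0, and let Ω ⊆ ℝⁿ be a nonempty bounded open set which equals the interior of its closure. Suppose that the Lebesgue measure of Ω equals the Lebesgue measure of an open ball of radius r in ℝⁿ, and that the (n−1)-dimensional Hausdorff measure of the topological boundary of Ω equals the (n−1)-dimensional Hausdorff measure of a Euclidean sphere of radius r in ℝⁿ. Then there exists c ∈ ℝⁿ such that Ω is the open ball of radius r centered at c. -/

import Mathlib

open MeasureTheory Metric

/-!
Let `T` be the Knothe map of `Ω` onto the ball of radius `r` of the same volume. Its Jacobian matrix
is triangular with nonnegative diagonal and determinant one, so its divergence is at least `n` by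
the AM-GM inequality, while `‖T‖ ≤ r` bounds the integral of the divergence by `r |∂Ω|`. This gives
the isoperimetric inequality `n |Ω| ≤ r |∂Ω|`, and for a sphere the two sides agree. When they agree
for `Ω`, so do the diagonal entries of the Jacobian almost everywhere; the first one is then `1`,
which says that the volumes of the slices `{x₁ = t} ∩ Ω` are those of a ball. Thus `Ω` lies in a
slab of width `2r` orthogonal to `e₁`, symmetric about the barycentre. Since every direction may
play the role of `e₁`, `Ω` lies in the ball of radius `r` about its barycentre, and it has the
volume of that ball.
-/

noncomputable section

open Set Filter Topology Module
open scoped ENNReal NNReal Pointwise RealInnerProductSpace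

section Coordinates

/-- Euclidean `n`-space. -/
abbrev Euc (n : ℕ) : Type := EuclideanSpace ℝ (Fin n)

/-- The `j`-th standard basis vector of Euclidean space. -/
abbrev stdVec {n : ℕ} (j : Fin n) : Euc n := EuclideanSpace.single j 1

/-- The identification of `ℝ × ℝᵐ` with `ℝᵐ⁺¹` given by prepending a coordinate. -/
def consEuc (m : ℕ) : ℝ × Euc m ≃ᵐ Euc (m + 1) :=
  ((MeasurableEquiv.refl ℝ).prodCongr (MeasurableEquiv.toLp 2 (Fin m → ℝ)).symm).trans
    ((MeasurableEquiv.piFinSuccAbove (fun _ => ℝ) 0).symm.trans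
      (MeasurableEquiv.toLp 2 (Fin (m + 1) → ℝ)))

/-- The projection `ℝᵐ⁺¹ → ℝᵐ` forgetting the first coordinate. -/
def tailEuc {m : ℕ} (x : Euc (m + 1)) : Euc m := ((consEuc m).symm x).2

variable {m : ℕ}

@[simp] lemma consEuc_apply_zero (p : ℝ × Euc m) : consEuc m p 0 = p.1 := rfl

@[simp] lemma consEuc_apply_succ (p : ℝ × Euc m) (j : Fin m) : consEuc m p j.succ = p.2 j := rfl

@[simp] lemma tailEuc_apply (x : Euc (m + 1)) (j : Fin m) : tailEuc x j = x j.succ := rfl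

@[simp] lemma consEuc_symm_apply (x : Euc (m + 1)) : (consEuc m).symm x = (x 0, tailEuc x) := rfl

@[simp] lemma tailEuc_consEuc (p : ℝ × Euc m) : tailEuc (consEuc m p) = p.2 := rfl

@[simp] lemma consEuc_tailEuc (x : Euc (m + 1)) : consEuc m (x 0, tailEuc x) = x :=
  (consEuc m).apply_symm_apply x

lemma continuous_consEuc (m : ℕ) : Continuous (consEuc m) :=
  (PiLp.continuous_toLp 2 _).comp <| continuous_pi <| Fin.cases continuous_fst fun j =>
    (by fun_prop : Continuous fun p : ℝ × Euc m => p.2 j)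

lemma measurePreserving_consEuc (m : ℕ) : MeasurePreserving (consEuc m) :=
  (PiLp.volume_preserving_toLp (Fin (m + 1))).comp
    (((volume_preserving_piFinSuccAbove (fun _ : Fin (m + 1) => ℝ) 0).symm _).comp
      ((MeasurePreserving.id volume).prod (PiLp.volume_preserving_ofLp (Fin m))))

lemma ae_mem_iff_ae_ae_consEuc_mem {s : Set (Euc (m + 1))} (hs : MeasurableSet s) :
    (∀ᵐ x, x ∈ s) ↔ ∀ᵐ t, ∀ᵐ x, consEuc m (t, x) ∈ s := by
  rw [← Measure.ae_prod_iff_ae_ae ((consEuc m).measurable hs), ← Measure.volume_eq_prod]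
  nth_rw 1 [← (measurePreserving_consEuc m).map_eq]
  exact ae_map_iff (consEuc m).measurable.aemeasurable hs

lemma measurable_tailEuc : Measurable (tailEuc : Euc (m + 1) → Euc m) :=
  measurable_snd.comp (consEuc m).symm.measurable

lemma norm_sq_eq_sq_add_norm_tailEuc_sq (x : Euc (m + 1)) :
    ‖x‖ ^ 2 = x 0 ^ 2 + ‖tailEuc x‖ ^ 2 := by
  simp [EuclideanSpace.norm_sq_eq, Fin.sum_univ_succ]

lemma tailEuc_sub (x y : Euc (m + 1)) : tailEuc (x - y) = tailEuc x - tailEuc y := rfl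

lemma lipschitzWith_tailEuc : LipschitzWith 1 (tailEuc : Euc (m + 1) → Euc m) := by
  refine LipschitzWith.of_dist_le_mul fun x y => ?_
  rw [NNReal.coe_one, one_mul, dist_eq_norm, dist_eq_norm, ← tailEuc_sub]
  have h := norm_sq_eq_sq_add_norm_tailEuc_sq (x - y)
  exact le_of_sq_le_sq (by nlinarith [sq_nonneg ((x - y) 0)]) (norm_nonneg _)

lemma consEuc_add_smul_stdVec_zero (p : ℝ × Euc m) (t : ℝ) :
    consEuc m p + t • stdVec 0 = consEuc m (p.1 + t, p.2) := by
  ext j; refine Fin.cases ?_ (fun j => ?_) j <;> simp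

lemma consEuc_add_smul_stdVec_succ (p : ℝ × Euc m) (j : Fin m) (t : ℝ) :
    consEuc m p + t • stdVec j.succ = consEuc m (p.1, p.2 + t • stdVec j) := by
  ext i; refine Fin.cases ?_ (fun i => ?_) i <;> simp [Fin.succ_ne_zero]

end Coordinates

section Isometry

lemma euclideanHausdorffMeasure_frontier_linearIsometryEquiv_preimage {E F : Type*}
    [NormedAddCommGroup E] [NormedSpace ℝ E] [MeasurableSpace E] [BorelSpace E]
    [NormedAddCommGroup F] [NormedSpace ℝ F] [MeasurableSpace F] [BorelSpace F]
    (L : E ≃ₗᵢ[ℝ] F) (d : ℕ) (s : Set F) :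
    μHE[d] (frontier (L ⁻¹' s)) = μHE[d] (frontier s) := by
  rw [← L.coe_toHomeomorph, ← L.toHomeomorph.preimage_frontier, L.coe_toHomeomorph,
    L.isometry.euclideanHausdorffMeasure_preimage, L.surjective.range_eq, inter_univ]

variable {E : Type*} [NormedAddCommGroup E] [InnerProductSpace ℝ E] [FiniteDimensional ℝ E]

lemma finrank_sub_one_add_one_of_norm_eq_one {v : E} (hv : ‖v‖ = 1) :
    finrank ℝ E - 1 + 1 = finrank ℝ E :=
  Nat.sub_add_cancel (finrank_pos_iff_exists_ne_zero.2 ⟨v, norm_ne_zero_iff.1 (by simp [hv])⟩)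

lemma exists_linearIsometryEquiv_stdVec_zero {v : E} (hv : ‖v‖ = 1) :
    ∃ L : Euc (finrank ℝ E - 1 + 1) ≃ₗᵢ[ℝ] E, L (stdVec 0) = v := by
  obtain ⟨b, hb⟩ := Orthonormal.exists_orthonormalBasis_extension_of_card_eq (𝕜 := ℝ)
    (ι := Fin (finrank ℝ E - 1 + 1)) (v := fun _ => v) (s := {0})
    (by rw [Fintype.card_fin, finrank_sub_one_add_one_of_norm_eq_one hv]) (by
      rw [orthonormal_iff_ite]
      rintro ⟨i, rfl⟩ ⟨j, rfl⟩
      simp [hv])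
  exact ⟨b.repr.symm, by simpa using hb 0 rfl⟩

variable {F : Type*} [NormedAddCommGroup F] [InnerProductSpace ℝ F] [FiniteDimensional ℝ F]
  [MeasurableSpace E] [BorelSpace E] [MeasurableSpace F] [BorelSpace F]

lemma volume_linearIsometryEquiv_preimage (L : E ≃ₗᵢ[ℝ] F) (s : Set F) :
    volume (L ⁻¹' s) = volume s :=
  L.measurePreserving.measure_preimage_equiv (f := L.toMeasurableEquiv) s

lemma volume_linearIsometryEquiv_image (L : E ≃ₗᵢ[ℝ] F) (s : Set E) :
    volume (L '' s) = volume s := by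
  rw [← volume_linearIsometryEquiv_preimage L, preimage_image_eq _ L.injective]

end Isometry

section Sweep

lemma euclideanHausdorffMeasure_image_le_of_lipschitzWith {X Y : Type*}
    [EMetricSpace X] [MeasurableSpace X] [BorelSpace X]
    [EMetricSpace Y] [MeasurableSpace Y] [BorelSpace Y] {K : ℝ≥0} {f : X → Y}
    (hf : LipschitzWith K f) (d : ℕ) (s : Set X) :
    μHE[d] (f '' s) ≤ (K : ℝ≥0∞) ^ d * μHE[d] s := by
  simp only [Measure.euclideanHausdorffMeasure_def, Measure.smul_apply, mul_smul_comm]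
  gcongr
  simpa using hf.hausdorffMeasure_image_le (Nat.cast_nonneg d) s

variable {m : ℕ}

lemma volume_add_segment_stdVec_le_of_subset_slab {S : Set (Euc (m + 1))} {a η h : ℝ} (hh : 0 ≤ h)
    (hS : ∀ x ∈ S, x 0 ∈ Icc a (a + η)) :
    volume (S + segment ℝ 0 (h • stdVec 0)) ≤ ENNReal.ofReal (h + η) * μHE[m] S := by
  have hsub : S + segment ℝ 0 (h • stdVec 0) ⊆
      (consEuc m).symm ⁻¹' (Icc a (a + (h + η)) ×ˢ (tailEuc '' S)) := by
    rintro _ ⟨y, hy, _, ⟨s, t, hs, ht, hst, rfl⟩, rfl⟩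
    obtain ⟨hay, hya⟩ := hS y hy
    refine ⟨?_, y, hy, ?_⟩
    · simp only [consEuc_symm_apply, PiLp.add_apply, PiLp.smul_apply, PiLp.zero_apply,
        PiLp.single_apply, if_true, smul_eq_mul, mem_Icc]
      constructor <;> nlinarith
    · ext j; simp [Fin.succ_ne_zero]
  calc volume (S + segment ℝ 0 (h • stdVec 0))
      ≤ volume ((consEuc m).symm ⁻¹' (Icc a (a + (h + η)) ×ˢ (tailEuc '' S))) := measure_mono hsub
    _ = ENNReal.ofReal (h + η) * μHE[m] (tailEuc '' S) := by
      rw [((measurePreserving_consEuc m).symm (consEuc m)).measure_preimage_equiv,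
        Measure.volume_eq_prod, Measure.prod_prod, Real.volume_Icc,
        EuclideanSpace.euclideanHausdorffMeasure_eq_volume, add_sub_cancel_left]
    _ ≤ ENNReal.ofReal (h + η) * μHE[m] S := by
      gcongr
      simpa using euclideanHausdorffMeasure_image_le_of_lipschitzWith lipschitzWith_tailEuc m S

lemma tsum_measure_inter_fiber {α β : Type*} [MeasurableSpace α] [Countable β]
    [MeasurableSpace β] [MeasurableSingletonClass β] (μ : Measure α) {f : α → β}
    (hf : Measurable f) (S : Set α) : ∑' b, μ (S ∩ f ⁻¹' {b}) = μ S := by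
  have hfib : ∀ b, MeasurableSet (f ⁻¹' {b}) := fun b => hf (measurableSet_singleton b)
  calc ∑' b, μ (S ∩ f ⁻¹' {b}) = ∑' b : (univ : Set β), μ.restrict S (f ⁻¹' {(b : β)}) := by
        rw [tsum_univ fun b => μ.restrict S (f ⁻¹' {b})]
        simp only [Measure.restrict_apply (hfib _), inter_comm]
    _ = μ S := by
        rw [tsum_measure_preimage_singleton countable_univ fun b _ => hfib b, preimage_univ,
          Measure.restrict_apply_univ]

lemma volume_add_segment_stdVec_le_add {S : Set (Euc (m + 1))} {h η : ℝ} (hh : 0 ≤ h)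
    (hη : 0 < η) :
    volume (S + segment ℝ 0 (h • stdVec 0)) ≤ ENNReal.ofReal (h + η) * μHE[m] S := by
  let slab : ℤ → Set (Euc (m + 1)) := fun i => (fun x => ⌊x 0 / η⌋) ⁻¹' {i}
  have hcover :
      S + segment ℝ 0 (h • stdVec 0) = ⋃ i, (S ∩ slab i) + segment ℝ 0 (h • stdVec 0) := by
    have huniv : ⋃ i, slab i = univ := iUnion_eq_univ_iff.2 fun x => ⟨_, rfl⟩
    rw [← iUnion_add, ← inter_iUnion, huniv, inter_univ]
  calc volume (S + segment ℝ 0 (h • stdVec 0))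
      ≤ ∑' i, volume ((S ∩ slab i) + segment ℝ 0 (h • stdVec 0)) := by
        rw [hcover]; exact measure_iUnion_le _
    _ ≤ ∑' i, ENNReal.ofReal (h + η) * μHE[m] (S ∩ slab i) := by
        refine ENNReal.tsum_le_tsum fun i =>
          volume_add_segment_stdVec_le_of_subset_slab (a := i * η) hh ?_
        rintro x ⟨-, rfl⟩
        have hfloor := (le_div_iff₀ hη).1 (Int.floor_le (x 0 / η))
        have hlt := (div_lt_iff₀ hη).1 (Int.lt_floor_add_one (x 0 / η))
        constructor <;> nlinarith
    _ = ENNReal.ofReal (h + η) * μHE[m] S := by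
        rw [ENNReal.tsum_mul_left, tsum_measure_inter_fiber _ (by fun_prop)]

lemma volume_add_segment_stdVec_le {S : Set (Euc (m + 1))} {h : ℝ} (hh : 0 < h) :
    volume (S + segment ℝ 0 (h • stdVec 0)) ≤ ENNReal.ofReal h * μHE[m] S := by
  rcases eq_or_ne (μHE[m] S) ⊤ with htop | htop
  · simp [htop, ENNReal.mul_top, hh]
  have hlim : Tendsto (fun η : ℝ => ENNReal.ofReal (h + η) * μHE[m] S) (𝓝[>] 0)
      (𝓝 (ENNReal.ofReal (h + 0) * μHE[m] S)) :=
    ENNReal.Tendsto.mul_const (ENNReal.tendsto_ofReal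
      (((continuous_const.add continuous_id).tendsto 0).mono_left nhdsWithin_le_nhds)) (Or.inr htop)
  rw [add_zero] at hlim
  exact ge_of_tendsto hlim
    (eventually_mem_nhdsWithin.mono fun η hη => volume_add_segment_stdVec_le_add hh.le hη)

variable {E : Type*} [NormedAddCommGroup E] [InnerProductSpace ℝ E] [FiniteDimensional ℝ E]
  [MeasurableSpace E] [BorelSpace E]

theorem volume_add_segment_le (S : Set E) {w : E} (hw : w ≠ 0) :
    volume (S + segment ℝ 0 w) ≤ ‖w‖ₑ * μHE[finrank ℝ E - 1] S := by
  obtain ⟨L, hL⟩ := exists_linearIsometryEquiv_stdVec_zero (v := ‖w‖⁻¹ • w) (norm_smul_inv_norm hw)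
  have hLw : L (‖w‖ • stdVec 0) = w := by
    rw [map_smul, hL, smul_inv_smul₀ (norm_ne_zero_iff.2 hw)]
  have himage : L '' (L ⁻¹' S + segment ℝ 0 (‖w‖ • stdVec 0)) = S + segment ℝ 0 w := by
    rw [image_add, image_preimage_eq _ L.surjective]
    congr 1
    conv_rhs => rw [← hLw, ← map_zero L]
    exact image_segment ℝ L.toLinearEquiv.toLinearMap.toAffineMap _ _
  calc volume (S + segment ℝ 0 w)
      = volume (L ⁻¹' S + segment ℝ 0 (‖w‖ • stdVec 0)) := by
        rw [← himage, volume_linearIsometryEquiv_image]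
    _ ≤ ENNReal.ofReal ‖w‖ * μHE[finrank ℝ E - 1] (L ⁻¹' S) :=
        volume_add_segment_stdVec_le (norm_pos_iff.2 hw)
    _ = ‖w‖ₑ * μHE[finrank ℝ E - 1] S := by
        rw [L.isometry.euclideanHausdorffMeasure_preimage, L.surjective.range_eq, inter_univ,
          ofReal_norm]

end Sweep

section LocalVolume

lemma nonempty_inter_frontier_of_isPreconnected {X : Type*} [TopologicalSpace X]
    {s t : Set X} (hs : IsPreconnected s) (hst : (s ∩ t).Nonempty) (hst' : (s ∩ tᶜ).Nonempty) :
    (s ∩ frontier t).Nonempty := by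
  by_contra h
  have hcover : s ⊆ interior t ∪ interior tᶜ := by
    rw [← compl_frontier_eq_union_interior, subset_compl_iff_disjoint_right,
      disjoint_iff_inter_eq_empty]
    exact not_nonempty_iff_eq_empty.1 h
  obtain ⟨x, hx, hxt⟩ := hst
  obtain ⟨y, hy, hyt⟩ := hst'
  obtain ⟨z, -, hz, hz'⟩ := hs _ _ isOpen_interior isOpen_interior hcover
    ⟨x, hx, (hcover hx).resolve_right fun h => interior_subset h hxt⟩
    ⟨y, hy, (hcover hy).resolve_left fun h => hyt (interior_subset h)⟩
  exact interior_subset hz' (interior_subset hz)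

lemma tendsto_measureReal_inter_ball_add {X : Type*} [PseudoMetricSpace X]
    [MeasurableSpace X] [OpensMeasurableSpace X] {μ : Measure X} {S : Set X} (hS : MeasurableSet S)
    (hfin : μ S ≠ ⊤) (δ : ℝ) (y : X) :
    Tendsto (fun t => μ.real (S ∩ ball y (δ + t))) (𝓝[>] 0) (𝓝 (μ.real (S ∩ closedBall y δ))) := by
  have hInter : ⋂ t > (0 : ℝ), S ∩ ball y (δ + t) = S ∩ closedBall y δ := by
    ext x
    simp only [mem_iInter, mem_inter_iff, mem_ball, mem_closedBall]
    exact ⟨fun h => ⟨(h 1 one_pos).1, le_of_forall_pos_lt_add fun t ht => (h t ht).2⟩,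
      fun h t ht => ⟨h.1, by linarith [h.2]⟩⟩
  have h := tendsto_measure_biInter_gt (μ := μ) (s := fun t => S ∩ ball y (δ + t)) (a := (0 : ℝ))
    (fun t _ => (hS.inter measurableSet_ball).nullMeasurableSet)
    (fun s t _ hst => inter_subset_inter_right _ (ball_subset_ball (by gcongr)))
    ⟨1, one_pos, measure_ne_top_of_subset inter_subset_left hfin⟩
  rw [hInter] at h
  exact (ENNReal.tendsto_toReal (measure_ne_top_of_subset inter_subset_left hfin)).comp h

variable {E : Type*} [NormedAddCommGroup E] [InnerProductSpace ℝ E] [FiniteDimensional ℝ E]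
  [MeasurableSpace E] [BorelSpace E]

/-- The volume of the part of `Ω` within distance `δ` of `y`: up to the factor `|B_δ|`, the
mollification of the indicator function of `Ω` at scale `δ`. -/
def localVolume (Ω : Set E) (δ : ℝ) (y : E) : ℝ := volume.real (Ω ∩ ball y δ)

variable {Ω : Set E}

lemma measure_inter_ball_ne_top (Ω : Set E) (δ : ℝ) (y : E) : volume (Ω ∩ ball y δ) ≠ ⊤ :=
  measure_ne_top_of_subset inter_subset_right measure_ball_lt_top.ne

lemma localVolume_nonneg (Ω : Set E) (δ : ℝ) (y : E) : 0 ≤ localVolume Ω δ y :=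
  measureReal_nonneg

lemma ofReal_localVolume (Ω : Set E) (δ : ℝ) (y : E) :
    ENNReal.ofReal (localVolume Ω δ y) = volume (Ω ∩ ball y δ) :=
  ofReal_measureReal (measure_inter_ball_ne_top Ω δ y)

lemma localVolume_eq_zero_of_notMem_thickening {δ : ℝ} {y : E} (hy : y ∉ thickening δ Ω) :
    localVolume Ω δ y = 0 := by
  have hempty : Ω ∩ ball y δ = ∅ := eq_empty_of_forall_notMem fun x hx =>
    hy (mem_thickening_iff.2 ⟨x, hx.1, by simpa only [dist_comm] using mem_ball.1 hx.2⟩)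
  rw [localVolume, hempty, measureReal_empty]

lemma hasCompactSupport_localVolume (hΩ : Bornology.IsBounded Ω) (δ : ℝ) :
    HasCompactSupport (localVolume Ω δ) :=
  .intro (K := closure (thickening δ Ω)) hΩ.thickening.isCompact_closure fun _ hy =>
    localVolume_eq_zero_of_notMem_thickening fun h => hy (subset_closure h)

lemma volume_inter_ball_sub_le (Ω : Set E) (δ : ℝ) (y : E) {w : E} (hw : w ≠ 0) :
    volume (Ω ∩ ball (y - w) δ) ≤ volume (Ω ∩ ball y δ) +
      ‖w‖ₑ * μHE[finrank ℝ E - 1] (frontier Ω ∩ ball y (δ + ‖w‖)) := by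
  set S := frontier Ω ∩ ball y (δ + ‖w‖)
  have hsub : (· + -w) ⁻¹' (Ω ∩ ball (y - w) δ) ⊆ (Ω ∩ ball y δ) ∪ (S + segment ℝ 0 w) := by
    rintro x ⟨hx, hxb⟩
    have hxy : x ∈ ball y δ := by simpa [← sub_eq_add_neg] using hxb
    by_cases hxΩ : x ∈ Ω
    · exact Or.inl ⟨hxΩ, hxy⟩
    obtain ⟨z, hz, hzΩ⟩ := nonempty_inter_frontier_of_isPreconnected
      (convex_segment (x + -w) x).isPreconnected
      ⟨_, left_mem_segment ℝ _ _, hx⟩ ⟨_, right_mem_segment ℝ _ _, hxΩ⟩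
    obtain ⟨t, ht, rfl⟩ := (segment_eq_image' ℝ (x + -w) x) ▸ hz
    have hzx : x + -w + t • (x - (x + -w)) = x - (1 - t) • w := by module
    simp only [hzx] at hzΩ hz ⊢
    have hdist : dist (x - (1 - t) • w) x ≤ ‖w‖ := by
      rw [dist_self_sub_left, norm_smul, Real.norm_of_nonneg (by linarith [ht.2])]
      nlinarith [ht.1, norm_nonneg w]
    refine Or.inr ⟨x - (1 - t) • w, ⟨hzΩ, mem_ball.2 ?_⟩, (1 - t) • w,
      ⟨t, 1 - t, ht.1, by linarith [ht.2], by ring, by module⟩, by module⟩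
    linarith [dist_triangle (x - (1 - t) • w) x y, mem_ball.1 hxy]
  calc volume (Ω ∩ ball (y - w) δ)
      = volume ((· + -w) ⁻¹' (Ω ∩ ball (y - w) δ)) := (measure_preimage_add_right _ _ _).symm
    _ ≤ volume ((Ω ∩ ball y δ) ∪ (S + segment ℝ 0 w)) := measure_mono hsub
    _ ≤ volume (Ω ∩ ball y δ) + ‖w‖ₑ * μHE[finrank ℝ E - 1] S :=
        (measure_union_le _ _).trans (add_le_add le_rfl (volume_add_segment_le S hw))

lemma localVolume_sub_le (hfin : μHE[finrank ℝ E - 1] (frontier Ω) ≠ ⊤) (δ : ℝ) (y : E) {w : E}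
    (hw : w ≠ 0) :
    localVolume Ω δ (y - w) ≤ localVolume Ω δ y +
      ‖w‖ * μHE[finrank ℝ E - 1].real (frontier Ω ∩ ball y (δ + ‖w‖)) := by
  have hne : ‖w‖ₑ * μHE[finrank ℝ E - 1] (frontier Ω ∩ ball y (δ + ‖w‖)) ≠ ⊤ :=
    ENNReal.mul_ne_top enorm_ne_top (measure_ne_top_of_subset inter_subset_left hfin)
  have hle := ENNReal.toReal_mono
    (ENNReal.add_ne_top.2 ⟨measure_inter_ball_ne_top Ω δ y, hne⟩)
    (volume_inter_ball_sub_le Ω δ y hw)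
  rwa [ENNReal.toReal_add (measure_inter_ball_ne_top Ω δ y) hne, ENNReal.toReal_mul,
    toReal_enorm] at hle

lemma lipschitzWith_localVolume (hfin : μHE[finrank ℝ E - 1] (frontier Ω) ≠ ⊤) (δ : ℝ) :
    LipschitzWith (μHE[finrank ℝ E - 1] (frontier Ω)).toNNReal (localVolume Ω δ) := by
  refine LipschitzWith.of_le_add_mul _ fun y z => ?_
  rcases eq_or_ne z y with rfl | hne
  · simp
  have h := localVolume_sub_le hfin δ z (sub_ne_zero.2 hne)
  rw [sub_sub_cancel] at h
  refine h.trans (add_le_add le_rfl ?_)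
  rw [mul_comm, dist_comm, dist_eq_norm]
  gcongr
  exact ENNReal.toReal_mono hfin (measure_mono inter_subset_left)

lemma norm_fderiv_localVolume_le (hfin : μHE[finrank ℝ E - 1] (frontier Ω) ≠ ⊤) {δ : ℝ} {y : E}
    (hy : DifferentiableAt ℝ (localVolume Ω δ) y) :
    ‖fderiv ℝ (localVolume Ω δ) y‖ ≤
      μHE[finrank ℝ E - 1].real (frontier Ω ∩ closedBall y δ) := by
  set c := μHE[finrank ℝ E - 1].real (frontier Ω ∩ closedBall y δ)
  have hle : ∀ v : E, ‖v‖ = 1 → fderiv ℝ (localVolume Ω δ) y v ≤ c := by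
    intro v hv
    refine le_of_tendsto_of_tendsto (hy.hasFDerivAt.hasLineDerivAt v).tendsto_slope_zero_right
      (tendsto_measureReal_inter_ball_add isClosed_frontier.measurableSet hfin δ y) ?_
    filter_upwards [self_mem_nhdsWithin] with t ht
    have hv0 : v ≠ 0 := by rintro rfl; simp at hv
    have hsub := localVolume_sub_le hfin δ y
      (smul_ne_zero (neg_ne_zero.2 (ne_of_gt (mem_Ioi.1 ht))) hv0)
    rw [neg_smul, sub_neg_eq_add, norm_neg, norm_smul, hv, mul_one,
      Real.norm_of_nonneg (le_of_lt ht)] at hsub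
    rwa [smul_eq_mul, inv_mul_le_iff₀ ht, sub_le_iff_le_add']
  refine ContinuousLinearMap.opNorm_le_of_unit_norm measureReal_nonneg fun v hv => ?_
  rw [Real.norm_eq_abs, abs_le, neg_le, ← map_neg]
  exact ⟨hle (-v) (by rwa [norm_neg]), hle v hv⟩

end LocalVolume

section LowerLineDeriv

variable {E : Type*} [NormedAddCommGroup E]

lemma integrable_mul_comp_add_right [MeasurableSpace E] [BorelSpace E] {μ : Measure E}
    [μ.IsAddHaarMeasure] {u g : E → ℝ} (hu : Continuous u)
    (hus : HasCompactSupport u) (hg : LocallyIntegrable g μ) (w : E) :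
    Integrable (fun x => u x * g (x + w)) μ := by
  have hint := hg.integrable_smul_left_of_hasCompactSupport (hu.comp (continuous_add_const (-w)))
    (hus.comp_homeomorph (Homeomorph.addRight (-w)))
  simpa using hint.comp_add_right w

variable [NormedSpace ℝ E]

/-- The lower directional derivative of `g` at `x` in the direction `v`, computed along the
steps `1 / (k + 1)`. The truncation by `ENNReal.ofReal` is harmless for functions that are monotone
in the direction `v`. -/
def lowerLineDeriv (g : E → ℝ) (v x : E) : ℝ≥0∞ :=
  liminf (fun k : ℕ =>
    ENNReal.ofReal (((k : ℝ) + 1)⁻¹⁻¹ * (g (x + ((k : ℝ) + 1)⁻¹ • v) - g x))) atTop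

lemma tendsto_inv_natCast_add_one_nhdsGT :
    Tendsto (fun k : ℕ => ((k : ℝ) + 1)⁻¹) atTop (𝓝[>] 0) := by
  refine tendsto_nhdsWithin_iff.2 ⟨?_, Eventually.of_forall fun k => mem_Ioi.2 (by positivity)⟩
  simpa only [one_div] using tendsto_one_div_add_atTop_nhds_zero_nat (𝕜 := ℝ)

lemma lowerLineDeriv_eq_of_hasLineDerivAt {g : E → ℝ} {v x : E} {d : ℝ}
    (h : HasLineDerivAt ℝ g d x v) : lowerLineDeriv g v x = ENNReal.ofReal d := by
  refine Tendsto.liminf_eq (ENNReal.tendsto_ofReal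
    ((h.tendsto_slope_zero_right.comp tendsto_inv_natCast_add_one_nhdsGT).congr fun k => ?_))
  simp

lemma lineDeriv_mul_indicator_of_tsupport_subset {u : E → ℝ} {K : Set E} (hK : tsupport u ⊆ K)
    (g : E → ℝ) (v x : E) :
    lineDeriv ℝ u x v * K.indicator g x = lineDeriv ℝ u x v * g x := by
  by_cases hx : x ∈ K
  · rw [indicator_of_mem hx]
  have hu : u =ᶠ[𝓝 x] 0 := notMem_tsupport_iff_eventuallyEq.1 fun h => hx (hK h)
  rw [show lineDeriv ℝ u x v = 0 by rw [hu.lineDeriv_eq]; simp [lineDeriv], zero_mul, zero_mul]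

lemma inv_mul_sub_nonneg_of_monotone {g : E → ℝ} {v : E}
    (hmono : ∀ x (t : ℝ), 0 ≤ t → g x ≤ g (x + t • v))
    (x : E) {t : ℝ} (ht : 0 ≤ t) : 0 ≤ t⁻¹ * (g (x + t • v) - g x) :=
  mul_nonneg (inv_nonneg.2 ht) (sub_nonneg.2 (hmono x t ht))

variable [MeasurableSpace E] [BorelSpace E]

lemma measurable_lowerLineDeriv {g : E → ℝ} (hg : Measurable g) (v : E) :
    Measurable (lowerLineDeriv g v) := by
  refine Measurable.liminf fun k => ENNReal.measurable_ofReal.comp ?_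
  have : Measurable fun x => g (x + ((k : ℝ) + 1)⁻¹ • v) := hg.comp (measurable_add_const _)
  fun_prop

variable {μ : Measure E} {u g : E → ℝ} {v : E} {C : ℝ≥0}

lemma integrable_lineDeriv_mul [IsLocallyFiniteMeasure μ] (hu : LipschitzWith C u)
    (hus : HasCompactSupport u) (hg : LocallyIntegrable g μ) (v : E) :
    Integrable (fun x => lineDeriv ℝ u x v * g x) μ := by
  have hind : Integrable ((tsupport u).indicator g) μ :=
    (hg.integrableOn_isCompact hus.isCompact).integrable_indicator
      (isClosed_tsupport u).measurableSet
  simpa only [lineDeriv_mul_indicator_of_tsupport_subset subset_rfl] using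
    hind.bdd_mul (aestronglyMeasurable_lineDeriv hu.continuous μ)
      (Eventually.of_forall fun x => norm_lineDeriv_le_of_lipschitz ℝ hu)

variable [μ.IsAddHaarMeasure]

lemma integral_mul_smul_sub_eq (hu : Continuous u) (hus : HasCompactSupport u)
    (hg : LocallyIntegrable g μ) (t : ℝ) (v : E) :
    ∫ x, u x * (t⁻¹ * (g (x + t • v) - g x)) ∂μ =
      ∫ x, (t⁻¹ • (u (x + t • -v) - u x)) * g x ∂μ := by
  have hug : Integrable (fun x => u x * g x) μ :=
    hg.integrable_smul_left_of_hasCompactSupport hu hus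
  have hshift := integral_add_right_eq_self (μ := μ) (fun x => u (x + t • -v) * g x) (t • v)
  have hshiftint : Integrable (fun x => u (x + t • -v) * g x) μ := by
    simpa using (integrable_mul_comp_add_right hu hus hg (t • v)).comp_add_right (t • -v)
  simp only [smul_neg, add_neg_cancel_right] at hshift hshiftint
  calc ∫ x, u x * (t⁻¹ * (g (x + t • v) - g x)) ∂μ
      = t⁻¹ * ∫ x, (u x * g (x + t • v) - u x * g x) ∂μ := by
        rw [← integral_const_mul]; congr 1 with x; ring
    _ = t⁻¹ * ∫ x, (u (x + -(t • v)) * g x - u x * g x) ∂μ := by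
        rw [integral_sub (integrable_mul_comp_add_right hu hus hg _) hug, hshift,
          integral_sub hshiftint hug]
    _ = ∫ x, (t⁻¹ • (u (x + t • -v) - u x)) * g x ∂μ := by
        rw [← integral_const_mul]; congr 1 with x; rw [smul_neg, smul_eq_mul]; ring

variable [FiniteDimensional ℝ E]

theorem tendsto_integral_mul_inv_mul_sub (hu : LipschitzWith C u) (hus : HasCompactSupport u)
    (hg : LocallyIntegrable g μ) (v : E) :
    Tendsto (fun t : ℝ => ∫ x, u x * (t⁻¹ * (g (x + t • v) - g x)) ∂μ) (𝓝[>] 0)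
      (𝓝 (∫ x, lineDeriv ℝ u x (-v) * g x ∂μ)) := by
  set K := cthickening ‖v‖ (tsupport u)
  have hsub : tsupport u ⊆ K := self_subset_cthickening _
  have hint : Integrable (K.indicator g) μ :=
    (hg.integrableOn_isCompact hus.isCompact.cthickening).integrable_indicator
      isClosed_cthickening.measurableSet
  have hlim := hu.integral_inv_smul_sub_mul_tendsto_integral_lineDeriv_mul hint (-v)
  simp only [lineDeriv_mul_indicator_of_tsupport_subset hsub] at hlim
  refine hlim.congr' ?_
  filter_upwards [Ioc_mem_nhdsGT one_pos] with t ht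
  rw [integral_mul_smul_sub_eq hu.continuous hus hg]
  congr 1 with x
  by_cases hx : x ∈ K
  · rw [indicator_of_mem hx]
  have hux : u x = 0 := image_eq_zero_of_notMem_tsupport fun h => hx (hsub h)
  have hux' : u (x + t • -v) = 0 := by
    refine image_eq_zero_of_notMem_tsupport fun h => hx (mem_cthickening_of_dist_le x _ _ _ h ?_)
    rw [dist_self_add_right, norm_smul, norm_neg, Real.norm_of_nonneg ht.1.le]
    exact mul_le_of_le_one_left (norm_nonneg v) ht.2
  rw [hux, hux', sub_zero, smul_zero, zero_mul, zero_mul]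

lemma integral_lineDeriv_neg_mul_nonneg (hu : LipschitzWith C u) (hus : HasCompactSupport u)
    (hu0 : ∀ x, 0 ≤ u x) (hg : LocallyIntegrable g μ)
    (hmono : ∀ x (t : ℝ), 0 ≤ t → g x ≤ g (x + t • v)) :
    0 ≤ ∫ x, lineDeriv ℝ u x (-v) * g x ∂μ := by
  refine ge_of_tendsto (tendsto_integral_mul_inv_mul_sub hu hus hg v) ?_
  filter_upwards [self_mem_nhdsWithin] with t ht
  exact integral_nonneg fun x =>
    mul_nonneg (hu0 x) (inv_mul_sub_nonneg_of_monotone hmono x (mem_Ioi.1 ht).le)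

theorem lintegral_mul_lowerLineDeriv_le (hu : LipschitzWith C u) (hus : HasCompactSupport u)
    (hu0 : ∀ x, 0 ≤ u x) (hg : LocallyIntegrable g μ)
    (hmono : ∀ x (t : ℝ), 0 ≤ t → g x ≤ g (x + t • v)) :
    ∫⁻ x, ENNReal.ofReal (u x) * lowerLineDeriv g v x ∂μ ≤
      ENNReal.ofReal (∫ x, lineDeriv ℝ u x (-v) * g x ∂μ) := by
  set q : ℕ → E → ℝ := fun k x => ((k : ℝ) + 1)⁻¹⁻¹ * (g (x + ((k : ℝ) + 1)⁻¹ • v) - g x)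
  have hq : ∀ k x, 0 ≤ u x * q k x := fun k x =>
    mul_nonneg (hu0 x) (inv_mul_sub_nonneg_of_monotone hmono x (by positivity))
  have hqint : ∀ k, Integrable (fun x => u x * q k x) μ := fun k =>
    (((integrable_mul_comp_add_right hu.continuous hus hg (((k : ℝ) + 1)⁻¹ • v)).sub
      (hg.integrable_smul_left_of_hasCompactSupport hu.continuous hus)).const_mul
        ((k : ℝ) + 1)⁻¹⁻¹).congr
      (Eventually.of_forall fun x => by simp only [q, Pi.sub_apply]; ring)
  have hlim : Tendsto (fun k => ∫ x, u x * q k x ∂μ) atTop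
      (𝓝 (∫ x, lineDeriv ℝ u x (-v) * g x ∂μ)) :=
    (tendsto_integral_mul_inv_mul_sub hu hus hg v).comp tendsto_inv_natCast_add_one_nhdsGT
  calc ∫⁻ x, ENNReal.ofReal (u x) * lowerLineDeriv g v x ∂μ
      = ∫⁻ x, liminf (fun k => ENNReal.ofReal (u x * q k x)) atTop ∂μ := by
        congr 1 with x
        rw [lowerLineDeriv, ← ENNReal.liminf_const_mul_of_ne_top ENNReal.ofReal_ne_top]
        simp only [q, ENNReal.ofReal_mul (hu0 x)]
    _ ≤ liminf (fun k => ∫⁻ x, ENNReal.ofReal (u x * q k x) ∂μ) atTop :=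
        lintegral_liminf_le' fun k => (hqint k).aestronglyMeasurable.aemeasurable.ennreal_ofReal
    _ = liminf (fun k => ENNReal.ofReal (∫ x, u x * q k x ∂μ)) atTop := by
        congr 1 with k
        exact (ofReal_integral_eq_lintegral_ofReal (hqint k) (Eventually.of_forall (hq k))).symm
    _ = ENNReal.ofReal (∫ x, lineDeriv ℝ u x (-v) * g x ∂μ) :=
        (ENNReal.tendsto_ofReal hlim).liminf_eq

end LowerLineDeriv

section DivergenceInequality

variable {E : Type*} [NormedAddCommGroup E] [InnerProductSpace ℝ E] [FiniteDimensional ℝ E]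
  [MeasurableSpace E] [BorelSpace E]

lemma lintegral_measure_inter_closedBall (μ : Measure E) {S : Set E} (hS : μ S ≠ ⊤) (ρ : ℝ) :
    ∫⁻ x, μ (S ∩ closedBall x ρ) = volume (closedBall (0 : E) ρ) * μ S := by
  have : IsFiniteMeasure (μ.restrict S) := ⟨by simpa using hS.lt_top⟩
  have hset : MeasurableSet {p : E × E | dist p.2 p.1 ≤ ρ} :=
    (isClosed_le (by fun_prop) continuous_const).measurableSet
  calc ∫⁻ x, μ (S ∩ closedBall x ρ)
      = ∫⁻ x, μ.restrict S (Prod.mk x ⁻¹' {p : E × E | dist p.2 p.1 ≤ ρ}) := by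
        congr 1 with x
        rw [inter_comm, ← Measure.restrict_apply measurableSet_closedBall]; rfl
    _ = ∫⁻ y, volume ((fun x => (x, y)) ⁻¹' {p : E × E | dist p.2 p.1 ≤ ρ}) ∂μ.restrict S := by
        rw [← Measure.prod_apply hset, Measure.prod_apply_symm hset]
    _ = ∫⁻ _, volume (closedBall (0 : E) ρ) ∂μ.restrict S := by
        congr 1 with y
        rw [← Measure.addHaar_closedBall_center volume y]
        congr 1; ext x; simp [dist_comm]
    _ = volume (closedBall (0 : E) ρ) * μ S := by
        rw [lintegral_const, Measure.restrict_apply_univ]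

variable {Ω : Set E} {f : E → E} {ι : Type*} [Fintype ι]

lemma locallyIntegrable_inner_of_norm_le_one (hf : Measurable f) (hf1 : ∀ x, ‖f x‖ ≤ 1) (v : E) :
    LocallyIntegrable (fun x => ⟪v, f x⟫) :=
  (memLp_top_of_bound (by fun_prop) ‖v‖ (Eventually.of_forall fun x =>
    (norm_inner_le_norm _ _).trans (mul_le_of_le_one_right (norm_nonneg v) (hf1 x)))
      ).locallyIntegrable le_top

lemma enorm_sum_lineDeriv_localVolume_mul_le (b : OrthonormalBasis ι ℝ E)
    (hfin : μHE[finrank ℝ E - 1] (frontier Ω) ≠ ⊤) {δ : ℝ} {x w : E}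
    (hx : DifferentiableAt ℝ (localVolume Ω δ) x) (hw : ‖w‖ ≤ 1) :
    ‖∑ i, lineDeriv ℝ (localVolume Ω δ) x (-b i) * ⟪b i, w⟫‖ₑ ≤
      μHE[finrank ℝ E - 1] (frontier Ω ∩ closedBall x δ) := by
  have hsum : ∑ i, lineDeriv ℝ (localVolume Ω δ) x (-b i) * ⟪b i, w⟫ =
      -fderiv ℝ (localVolume Ω δ) x w := by
    conv_rhs => rw [← b.sum_repr' w]
    simp [hx.lineDeriv_eq_fderiv, mul_comm]
  have hle : ‖fderiv ℝ (localVolume Ω δ) x w‖ ≤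
      μHE[finrank ℝ E - 1].real (frontier Ω ∩ closedBall x δ) :=
    ((fderiv ℝ (localVolume Ω δ) x).le_opNorm w).trans
      ((mul_le_of_le_one_right (norm_nonneg _) hw).trans (norm_fderiv_localVolume_le hfin hx))
  rw [hsum, enorm_neg, ← ofReal_norm]
  exact (ENNReal.ofReal_le_ofReal hle).trans ENNReal.ofReal_toReal_le

lemma lintegral_localVolume_mul_sum_lowerLineDeriv_le (hbd : Bornology.IsBounded Ω)
    (hfin : μHE[finrank ℝ E - 1] (frontier Ω) ≠ ⊤) (b : OrthonormalBasis ι ℝ E) (hf : Measurable f)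
    (hf1 : ∀ x, ‖f x‖ ≤ 1)
    (hmono : ∀ i x (t : ℝ), 0 ≤ t → ⟪b i, f x⟫ ≤ ⟪b i, f (x + t • b i)⟫) (δ : ℝ) :
    ∫⁻ x, ENNReal.ofReal (localVolume Ω δ x) *
        ∑ i, lowerLineDeriv (fun y => ⟪b i, f y⟫) (b i) x ≤
      volume (closedBall (0 : E) δ) * μHE[finrank ℝ E - 1] (frontier Ω) := by
  set u := localVolume Ω δ
  have hu : LipschitzWith _ u := lipschitzWith_localVolume hfin δ
  have hus : HasCompactSupport u := hasCompactSupport_localVolume hbd δ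
  have hu0 : ∀ x, 0 ≤ u x := localVolume_nonneg Ω δ
  have hg := fun i => locallyIntegrable_inner_of_norm_le_one hf hf1 (b i)
  calc ∫⁻ x, ENNReal.ofReal (u x) * ∑ i, lowerLineDeriv (fun y => ⟪b i, f y⟫) (b i) x
      = ∑ i, ∫⁻ x, ENNReal.ofReal (u x) * lowerLineDeriv (fun y => ⟪b i, f y⟫) (b i) x := by
        simp only [Finset.mul_sum]
        exact lintegral_finsetSum _ fun i _ => hu.continuous.measurable.ennreal_ofReal.mul
          (measurable_lowerLineDeriv (by fun_prop) _)
    _ ≤ ∑ i, ENNReal.ofReal (∫ x, lineDeriv ℝ u x (-b i) * ⟪b i, f x⟫) :=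
        Finset.sum_le_sum fun i _ => lintegral_mul_lowerLineDeriv_le hu hus hu0 (hg i) (hmono i)
    _ = ENNReal.ofReal (∫ x, ∑ i, lineDeriv ℝ u x (-b i) * ⟪b i, f x⟫) := by
        rw [integral_finsetSum _ fun i _ => integrable_lineDeriv_mul hu hus (hg i) _,
          ENNReal.ofReal_sum_of_nonneg fun i _ =>
            integral_lineDeriv_neg_mul_nonneg hu hus hu0 (hg i) (hmono i)]
    _ ≤ ∫⁻ x, ‖∑ i, lineDeriv ℝ u x (-b i) * ⟪b i, f x⟫‖ₑ := by
        refine le_trans ?_ (enorm_integral_le_lintegral_enorm _)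
        rw [← ofReal_norm]
        exact ENNReal.ofReal_le_ofReal (Real.le_norm_self _)
    _ ≤ ∫⁻ x, μHE[finrank ℝ E - 1] (frontier Ω ∩ closedBall x δ) :=
        lintegral_mono_ae <| hu.ae_differentiableAt.mono fun x hx =>
          enorm_sum_lineDeriv_localVolume_mul_le b hfin hx (hf1 x)
    _ = volume (closedBall (0 : E) δ) * μHE[finrank ℝ E - 1] (frontier Ω) :=
        lintegral_measure_inter_closedBall _ hfin δ

lemma eventually_ofReal_localVolume_eq (hop : IsOpen Ω) {x : E} (hx : x ∈ Ω) :
    ∀ᶠ δ in 𝓝[>] 0, ENNReal.ofReal (localVolume Ω δ x) = volume (closedBall (0 : E) δ) := by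
  obtain ⟨ε, hε, hball⟩ := Metric.isOpen_iff.1 hop x hx
  filter_upwards [Ioo_mem_nhdsGT hε] with δ hδ
  rw [ofReal_localVolume, inter_eq_self_of_subset_right ((ball_subset_ball hδ.2.le).trans hball),
    Measure.addHaar_ball_of_pos volume x hδ.1, Measure.addHaar_closedBall volume 0 hδ.1.le]

/-- The divergence theorem, with the flux of `f` through `∂Ω` replaced by its trivial bound. -/
theorem setLIntegral_sum_lowerLineDeriv_le (hop : IsOpen Ω) (hbd : Bornology.IsBounded Ω)
    (b : OrthonormalBasis ι ℝ E) (hf : Measurable f) (hf1 : ∀ x, ‖f x‖ ≤ 1)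
    (hmono : ∀ i x (t : ℝ), 0 ≤ t → ⟪b i, f x⟫ ≤ ⟪b i, f (x + t • b i)⟫) :
    ∫⁻ x in Ω, ∑ i, lowerLineDeriv (fun y => ⟪b i, f y⟫) (b i) x ≤
      μHE[finrank ℝ E - 1] (frontier Ω) := by
  by_cases hfin : μHE[finrank ℝ E - 1] (frontier Ω) = ⊤
  · rw [hfin]; exact le_top
  set D : E → ℝ≥0∞ := fun x => ∑ i, lowerLineDeriv (fun y => ⟪b i, f y⟫) (b i) x
  have hD : Measurable D :=
    Finset.measurable_fun_sum _ fun i _ => measurable_lowerLineDeriv (by fun_prop) _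
  let δ : ℕ → ℝ := fun k => ((k : ℝ) + 1)⁻¹
  have hδ : ∀ k, 0 < δ k := fun k => by positivity
  let c : ℕ → ℝ≥0∞ := fun k => volume (closedBall (0 : E) (δ k))
  have hc0 : ∀ k, c k ≠ 0 := fun k => (measure_closedBall_pos _ _ (hδ k)).ne'
  have hct : ∀ k, c k ≠ ⊤ := fun k => measure_closedBall_lt_top.ne
  let w : ℕ → E → ℝ≥0∞ := fun k x => (c k)⁻¹ * (ENNReal.ofReal (localVolume Ω (δ k) x) * D x)
  have hw : ∀ x ∈ Ω, liminf (fun k => w k x) atTop = D x := by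
    intro x hx
    refine (liminf_congr ?_).trans (liminf_const (D x))
    filter_upwards [tendsto_inv_natCast_add_one_nhdsGT.eventually
      (eventually_ofReal_localVolume_eq hop hx)] with k hk
    rw [show w k x = (c k)⁻¹ * (c k * D x) from congrArg (fun a => (c k)⁻¹ * (a * D x)) hk,
      ENNReal.inv_mul_cancel_left (hc0 k) (hct k)]
  calc ∫⁻ x in Ω, D x = ∫⁻ x in Ω, liminf (fun k => w k x) atTop :=
        setLIntegral_congr_fun hop.measurableSet fun x hx => (hw x hx).symm
    _ ≤ liminf (fun k => ∫⁻ x in Ω, w k x) atTop := lintegral_liminf_le fun k =>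
        ((lipschitzWith_localVolume hfin _).continuous.measurable.ennreal_ofReal.mul hD).const_mul _
    _ ≤ μHE[finrank ℝ E - 1] (frontier Ω) := by
        refine (liminf_le_liminf (Eventually.of_forall fun k => ?_)).trans (liminf_const _).le
        refine (setLIntegral_le_lintegral _ _).trans ?_
        rw [lintegral_const_mul' _ _ (ENNReal.inv_ne_top.2 (hc0 k)),
          ENNReal.inv_mul_le_iff (hc0 k) (hct k)]
        exact lintegral_localVolume_mul_sum_lowerLineDeriv_le hbd hfin b hf hf1 hmono (δ k)

end DivergenceInequality

section CapQuantile

/-- The `n`-th power of the radius of the slice of the unit ball at height `u`. -/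
def capDensity (n : ℕ) (u : ℝ) : ℝ := √(1 - u ^ 2) ^ n

/-- The total mass of `capDensity n`. -/
def capMass (n : ℕ) : ℝ := ∫ u in (-1 : ℝ)..1, capDensity n u

/-- The cumulative distribution function of the normalized `capDensity n` on `[-1, 1]`. -/
def capCdf (n : ℕ) (s : ℝ) : ℝ := (∫ u in (-1 : ℝ)..s, capDensity n u) / capMass n

variable (n : ℕ)

lemma continuous_capDensity : Continuous (capDensity n) := by
  unfold capDensity; fun_prop

lemma capDensity_nonneg (u : ℝ) : 0 ≤ capDensity n u := by unfold capDensity; positivity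

lemma capDensity_neg (u : ℝ) : capDensity n (-u) = capDensity n u := by
  simp [capDensity]

lemma one_sub_sq_pos {u : ℝ} (hu : u ∈ Ioo (-1 : ℝ) 1) : 0 < 1 - u ^ 2 := by
  nlinarith [hu.1, hu.2]

lemma capDensity_pos {u : ℝ} (hu : u ∈ Ioo (-1 : ℝ) 1) : 0 < capDensity n u :=
  pow_pos (Real.sqrt_pos.2 (one_sub_sq_pos hu)) n

lemma intervalIntegral_capDensity_pos {a b : ℝ} (ha : -1 ≤ a) (hab : a < b) (hb : b ≤ 1) :
    0 < ∫ u in a..b, capDensity n u :=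
  intervalIntegral.intervalIntegral_pos_of_pos_on ((continuous_capDensity n).intervalIntegrable _ _)
    (fun _ hu => capDensity_pos n ⟨ha.trans_lt hu.1, hu.2.trans_le hb⟩) hab

lemma capMass_pos : 0 < capMass n :=
  intervalIntegral_capDensity_pos n le_rfl (by norm_num) le_rfl

lemma hasDerivAt_capCdf (s : ℝ) : HasDerivAt (capCdf n) (capDensity n s / capMass n) s :=
  (intervalIntegral.integral_hasDerivAt_right ((continuous_capDensity n).intervalIntegrable _ _)
    ((continuous_capDensity n).stronglyMeasurableAtFilter _ _)
    (continuous_capDensity n).continuousAt).div_const _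

lemma continuous_capCdf : Continuous (capCdf n) :=
  continuous_iff_continuousAt.2 fun s => (hasDerivAt_capCdf n s).continuousAt

@[simp] lemma capCdf_neg_one : capCdf n (-1) = 0 := by simp [capCdf]

@[simp] lemma capCdf_one : capCdf n 1 = 1 := div_self (capMass_pos n).ne'

lemma strictMonoOn_capCdf : StrictMonoOn (capCdf n) (Icc (-1) 1) := by
  intro a ha b hb hab
  refine (div_lt_div_iff_of_pos_right (capMass_pos n)).2 ?_
  have hi := fun x y : ℝ => (continuous_capDensity n).intervalIntegrable (μ := volume) x y
  linarith [intervalIntegral.integral_add_adjacent_intervals (hi (-1) a) (hi a b),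
    intervalIntegral_capDensity_pos n ha.1 hab hb.2]

lemma mapsTo_capCdf : MapsTo (capCdf n) (Icc (-1) 1) (Icc 0 1) := by
  simpa using (strictMonoOn_capCdf n).monotoneOn.mapsTo_Icc

lemma surjOn_capCdf : SurjOn (capCdf n) (Icc (-1) 1) (Icc 0 1) := by
  simpa [SurjOn] using
    intermediate_value_Icc (by norm_num : (-1 : ℝ) ≤ 1) (continuous_capCdf n).continuousOn

/-- `capCdf n` as an order isomorphism of `[-1, 1]` with `[0, 1]`. -/
def capIso : Icc (-1 : ℝ) 1 ≃o Icc (0 : ℝ) 1 :=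
  StrictMono.orderIsoOfSurjective ((mapsTo_capCdf n).restrict _ _ _)
    (fun a b hab => strictMonoOn_capCdf n a.2 b.2 hab)
    ((mapsTo_capCdf n).restrict_surjective_iff.2 (surjOn_capCdf n))

/-- The quantile function of the normalized `capDensity n`, extended by constants outside
`[0, 1]`. -/
def capQuantile : ℝ → ℝ := IccExtend zero_le_one fun p => ((capIso n).symm p : ℝ)

lemma continuous_capQuantile : Continuous (capQuantile n) :=
  (continuous_subtype_val.comp (capIso n).symm.continuous).Icc_extend'

lemma monotone_capQuantile : Monotone (capQuantile n) :=
  Monotone.IccExtend zero_le_one fun _ _ h => (capIso n).symm.monotone h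

lemma capQuantile_mem (p : ℝ) : capQuantile n p ∈ Icc (-1 : ℝ) 1 := Subtype.prop _

lemma capQuantile_capCdf {s : ℝ} (hs : s ∈ Icc (-1 : ℝ) 1) : capQuantile n (capCdf n s) = s := by
  rw [capQuantile, IccExtend_of_mem _ _ (mapsTo_capCdf n hs)]
  exact congrArg Subtype.val ((capIso n).symm_apply_apply ⟨s, hs⟩)

@[simp] lemma capQuantile_zero : capQuantile n 0 = -1 := by
  rw [← capCdf_neg_one n, capQuantile_capCdf n (by norm_num)]

@[simp] lemma capQuantile_one : capQuantile n 1 = 1 := by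
  simpa using capQuantile_capCdf n (s := 1) (by norm_num)

lemma capCdf_capQuantile {p : ℝ} (hp : p ∈ Icc (0 : ℝ) 1) : capCdf n (capQuantile n p) = p := by
  obtain ⟨s, hs, rfl⟩ := surjOn_capCdf n hp
  rw [capQuantile_capCdf n hs]

lemma capQuantile_mem_Ioo {p : ℝ} (hp : p ∈ Ioo (0 : ℝ) 1) : capQuantile n p ∈ Ioo (-1 : ℝ) 1 := by
  have h := capQuantile_mem n p
  have hc := capCdf_capQuantile n (Ioo_subset_Icc_self hp)
  refine ⟨lt_of_le_of_ne h.1 fun h' => ?_, lt_of_le_of_ne h.2 fun h' => ?_⟩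
  · rw [← h', capCdf_neg_one] at hc; exact hp.1.ne hc
  · rw [h', capCdf_one] at hc; exact hp.2.ne hc.symm

lemma hasDerivAt_capQuantile {p : ℝ} (hp : p ∈ Ioo (0 : ℝ) 1) :
    HasDerivAt (capQuantile n) (capDensity n (capQuantile n p) / capMass n)⁻¹ p := by
  refine HasDerivAt.of_local_left_inverse (continuous_capQuantile n).continuousAt
    (hasDerivAt_capCdf n _)
    (div_pos (capDensity_pos n (capQuantile_mem_Ioo n hp)) (capMass_pos n)).ne' ?_
  filter_upwards [Ioo_mem_nhds hp.1 hp.2] with q hq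
  exact capCdf_capQuantile n (Ioo_subset_Icc_self hq)

end CapQuantile

section Slices

variable {n : ℕ} {B : Set (Euc (n + 1))} {t γ : ℝ}

/-- The volume of the slice of `B` at height `t`. -/
def sliceVol (B : Set (Euc (n + 1))) (t : ℝ) : ℝ≥0∞ := volume {x : Euc n | consEuc n (t, x) ∈ B}

/-- The volume of the part of `B` lying below height `t`. -/
def headVol (B : Set (Euc (n + 1))) (t : ℝ) : ℝ := volume.real (B ∩ {x | x 0 ≤ t})

/-- The monotone map of the line transporting the normalized first marginal of `B` to that of the
unit ball. -/
def headMap (B : Set (Euc (n + 1))) (t : ℝ) : ℝ := capQuantile n (headVol B t / volume.real B)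

lemma measurable_sliceVol (hB : MeasurableSet B) : Measurable (sliceVol B) :=
  measurable_measure_prodMk_left ((consEuc n).measurable hB)

lemma setLIntegral_sliceVol (hB : MeasurableSet B) {S : Set ℝ} (hS : MeasurableSet S) :
    ∫⁻ t in S, sliceVol B t = volume (B ∩ {x | x 0 ∈ S}) := by
  have hm : MeasurableSet (B ∩ {x | x 0 ∈ S}) :=
    hB.inter (hS.preimage (by fun_prop : Measurable fun x : Euc (n + 1) => x 0))
  rw [← (measurePreserving_consEuc n).measure_preimage hm.nullMeasurableSet,
    Measure.volume_eq_prod, Measure.prod_apply ((consEuc n).measurable hm),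
    ← lintegral_indicator hS]
  congr 1 with t
  by_cases ht : t ∈ S
  · rw [indicator_of_mem ht, sliceVol]
    congr 1 with x; simp [ht]
  · rw [indicator_of_notMem ht, eq_comm]
    convert measure_empty (μ := (volume : Measure (Euc n)))
    ext x; simp [ht]

lemma lintegral_sliceVol (hB : MeasurableSet B) : ∫⁻ t, sliceVol B t = volume B := by
  simpa using setLIntegral_sliceVol hB MeasurableSet.univ

lemma ae_sliceVol_lt_top (hB : MeasurableSet B) (hfin : volume B ≠ ⊤) :
    ∀ᵐ t, sliceVol B t < ⊤ :=
  ae_lt_top (measurable_sliceVol hB) (by rwa [lintegral_sliceVol hB])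

lemma integrable_sliceVol (hB : MeasurableSet B) (hfin : volume B ≠ ⊤) :
    Integrable fun t => (sliceVol B t).toReal :=
  integrable_toReal_of_lintegral_ne_top (measurable_sliceVol hB).aemeasurable
    (by rwa [lintegral_sliceVol hB])

lemma setIntegral_sliceVol (hB : MeasurableSet B) (hfin : volume B ≠ ⊤)
    {S : Set ℝ} (hS : MeasurableSet S) :
    ∫ t in S, (sliceVol B t).toReal = volume.real (B ∩ {x | x 0 ∈ S}) := by
  rw [integral_toReal (measurable_sliceVol hB).aemeasurable
    (ae_restrict_of_ae (ae_sliceVol_lt_top hB hfin)), setLIntegral_sliceVol hB hS, measureReal_def]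

lemma headVol_sub (hB : MeasurableSet B) (hfin : volume B ≠ ⊤) (a b : ℝ) :
    headVol B b - headVol B a = ∫ t in a..b, (sliceVol B t).toReal := by
  rw [← intervalIntegral.integral_Iic_sub_Iic (integrable_sliceVol hB hfin).integrableOn
    (integrable_sliceVol hB hfin).integrableOn, setIntegral_sliceVol hB hfin measurableSet_Iic,
    setIntegral_sliceVol hB hfin measurableSet_Iic]
  rfl

lemma continuous_headVol (hB : MeasurableSet B) (hfin : volume B ≠ ⊤) :
    Continuous (headVol B) := by
  have h : headVol B = fun t => headVol B 0 + ∫ s in (0 : ℝ)..t, (sliceVol B s).toReal := by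
    ext t; rw [← headVol_sub hB hfin]; ring
  rw [h]
  exact continuous_const.add (intervalIntegral.continuous_primitive
    (fun a b => (integrable_sliceVol hB hfin).intervalIntegrable) 0)

lemma headVol_nonneg (B : Set (Euc (n + 1))) (t : ℝ) : 0 ≤ headVol B t := measureReal_nonneg

lemma headVol_le (hfin : volume B ≠ ⊤) (t : ℝ) : headVol B t ≤ volume.real B :=
  measureReal_mono inter_subset_left hfin

lemma monotone_headVol (hfin : volume B ≠ ⊤) : Monotone (headVol B) :=
  fun _ _ h => measureReal_mono (inter_subset_inter_right _ fun _ hx => le_trans hx h)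
    ((measure_mono inter_subset_left).trans_lt hfin.lt_top).ne

lemma monotone_headMap (B : Set (Euc (n + 1))) : Monotone (headMap B) := by
  by_cases hfin : volume B = ⊤
  · intro a b _; simp [headMap, measureReal_def, hfin]
  · exact (monotone_capQuantile n).comp fun a b h =>
      div_le_div_of_nonneg_right (monotone_headVol hfin h) measureReal_nonneg

lemma headMap_mem (B : Set (Euc (n + 1))) (t : ℝ) : headMap B t ∈ Icc (-1 : ℝ) 1 :=
  capQuantile_mem _ _

lemma ae_hasDerivAt_headVol (hB : MeasurableSet B) (hfin : volume B ≠ ⊤) :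
    ∀ᵐ t, HasDerivAt (headVol B) (sliceVol B t).toReal t := by
  filter_upwards [LocallyIntegrable.ae_hasDerivAt_integral
    (integrable_sliceVol hB hfin).locallyIntegrable] with t ht
  refine ((ht 0).const_add (headVol B 0)).congr_of_eventuallyEq (Eventually.of_forall fun s => ?_)
  simp only [← headVol_sub hB hfin]; ring

lemma headVol_mem_Ioo (hfin : volume B ≠ ⊤) (hγ : 0 < γ) (h : HasDerivAt (headVol B) γ t) :
    headVol B t ∈ Ioo 0 (volume.real B) := by
  refine ⟨lt_of_le_of_ne (headVol_nonneg B t) fun h0 => hγ.ne' ?_,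
    lt_of_le_of_ne (headVol_le hfin t) fun h1 => hγ.ne' ?_⟩
  · exact IsLocalMin.hasDerivAt_eq_zero (Eventually.of_forall fun s => h0 ▸ headVol_nonneg B s) h
  · exact IsLocalMax.hasDerivAt_eq_zero (Eventually.of_forall fun s => h1 ▸ headVol_le hfin s) h

lemma headVol_div_mem_Ioo (h : headVol B t ∈ Ioo 0 (volume.real B)) :
    headVol B t / volume.real B ∈ Ioo (0 : ℝ) 1 :=
  ⟨div_pos h.1 (h.1.trans h.2), (div_lt_one (h.1.trans h.2)).2 h.2⟩

lemma hasDerivAt_headMap (ht : headVol B t ∈ Ioo 0 (volume.real B))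
    (h : HasDerivAt (headVol B) γ t) :
    HasDerivAt (headMap B)
      (γ * capMass n / (volume.real B * capDensity n (headMap B t))) t := by
  have hV := ht.1.trans ht.2
  have hp := headVol_div_mem_Ioo ht
  have hd := capDensity_pos n (capQuantile_mem_Ioo n hp)
  have := (hasDerivAt_capQuantile n hp).comp t (h.div_const _)
  refine this.congr_deriv ?_
  change _ = γ * capMass n / (volume.real B * capDensity n (capQuantile n _))
  have hc := capMass_pos n
  field_simp

lemma ae_hasDerivAt_headMap (hB : MeasurableSet B) (hfin : volume B ≠ ⊤) :
    ∀ᵐ t, sliceVol B t < ⊤ ∧ (sliceVol B t ≠ 0 → headMap B t ∈ Ioo (-1) 1 ∧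
      ∃ d, HasDerivAt (headMap B) d t ∧
        d * capDensity n (headMap B t) * volume.real B = capMass n * (sliceVol B t).toReal) := by
  filter_upwards [ae_sliceVol_lt_top hB hfin, ae_hasDerivAt_headVol hB hfin] with t ht hd
  refine ⟨ht, fun h0 => ?_⟩
  have hhead := headVol_mem_Ioo hfin (ENNReal.toReal_pos h0 ht.ne) hd
  have hmem : headMap B t ∈ Ioo (-1) 1 := capQuantile_mem_Ioo n (headVol_div_mem_Ioo hhead)
  have hV := hhead.1.trans hhead.2
  have hdens := capDensity_pos n hmem
  refine ⟨hmem, _, hasDerivAt_headMap hhead hd, ?_⟩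
  field_simp

lemma sliceVol_unitBall {t : ℝ} : sliceVol (ball (0 : Euc (n + 1)) 1) t =
    (Ioo (-1 : ℝ) 1).indicator
      (fun t => ENNReal.ofReal (capDensity n t) * volume (ball (0 : Euc n) 1)) t := by
  have hmem : ∀ x : Euc n, consEuc n (t, x) ∈ ball (0 : Euc (n + 1)) 1 ↔ ‖x‖ ^ 2 < 1 - t ^ 2 := by
    intro x
    rw [mem_ball_zero_iff, ← sq_lt_one_iff₀ (norm_nonneg _), norm_sq_eq_sq_add_norm_tailEuc_sq,
      consEuc_apply_zero, tailEuc_consEuc, lt_sub_iff_add_lt']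
  simp_rw [sliceVol, hmem]
  by_cases ht : t ∈ Ioo (-1 : ℝ) 1
  · have hset : {x : Euc n | ‖x‖ ^ 2 < 1 - t ^ 2} = ball 0 (√(1 - t ^ 2)) := by
      ext x
      rw [mem_ofPred_eq, mem_ball_zero_iff, Real.lt_sqrt (norm_nonneg _)]
    rw [indicator_of_mem ht, hset,
      Measure.addHaar_ball_of_pos volume _ (Real.sqrt_pos.2 (one_sub_sq_pos ht)), capDensity,
      finrank_euclideanSpace_fin]
  · rw [indicator_of_notMem ht]
    convert measure_empty (μ := (volume : Measure (Euc n)))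
    refine eq_empty_of_forall_notMem fun x hx => ht (abs_lt.1 ?_)
    rw [mem_ofPred_eq] at hx
    exact (sq_lt_one_iff_abs_lt_one t).1 (by linarith [sq_nonneg ‖x‖])

lemma volume_unitBall_succ (n : ℕ) : volume (ball (0 : Euc (n + 1)) 1) =
    ENNReal.ofReal (capMass n) * volume (ball (0 : Euc n) 1) := by
  rw [← lintegral_sliceVol measurableSet_ball]
  simp_rw [sliceVol_unitBall]
  rw [lintegral_indicator measurableSet_Ioo, lintegral_mul_const _
    (continuous_capDensity n).measurable.ennreal_ofReal, capMass,
    intervalIntegral.integral_of_le (by norm_num), integral_Ioc_eq_integral_Ioo,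
    ofReal_integral_eq_lintegral_ofReal
    ((continuous_capDensity n).integrableOn_Icc.mono_set Ioo_subset_Icc_self)
    (Eventually.of_forall (capDensity_nonneg n))]

end Slices

section Knothe

/-- A measurable family of maps `φ (y, ·)` into the closed unit ball, each component of which is
monotone in its own coordinate, and whose Jacobian (the product of the diagonal entries, as the maps
are triangular) transports normalized volume on each fibre of `A` to normalized volume on the
ball. -/
structure IsKnothe {n : ℕ} {Y : Type*} [MeasurableSpace Y] (A : Set (Y × Euc n))
    (φ : Y × Euc n → Euc n) : Prop where
  measurable : Measurable φ
  norm_le : ∀ p, ‖φ p‖ ≤ 1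
  mono : ∀ y x j (t : ℝ), 0 ≤ t → φ (y, x) j ≤ φ (y, x + t • stdVec j) j
  det : ∀ y, volume (Prod.mk y ⁻¹' A) ≠ ⊤ → ∀ᵐ x, (y, x) ∈ A →
    (∏ j, lowerLineDeriv (fun x => φ (y, x) j) (stdVec j) x) * volume (Prod.mk y ⁻¹' A) =
      volume (ball (0 : Euc n) 1)

/-- The inductive step of the Knothe construction: the first coordinate is transported by
`headMap`, and the remaining ones by `φ`, rescaled to fit the slice of the unit ball. -/
def knotheSucc {n : ℕ} {Y : Type*} (A : Set (Y × Euc (n + 1))) (φ : (Y × ℝ) × Euc n → Euc n)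
    (p : Y × Euc (n + 1)) : Euc (n + 1) :=
  consEuc n (headMap (Prod.mk p.1 ⁻¹' A) (p.2 0),
    √(1 - headMap (Prod.mk p.1 ⁻¹' A) (p.2 0) ^ 2) • φ ((p.1, p.2 0), tailEuc p.2))

variable {n : ℕ} {Y : Type*} {A : Set (Y × Euc (n + 1))} {φ : (Y × ℝ) × Euc n → Euc n}

lemma knotheSucc_zero (y : Y) (x : Euc (n + 1)) :
    knotheSucc A φ (y, x) 0 = headMap (Prod.mk y ⁻¹' A) (x 0) := rfl

lemma knotheSucc_succ (y : Y) (x : Euc (n + 1)) (j : Fin n) :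
    knotheSucc A φ (y, x) j.succ =
      √(1 - headMap (Prod.mk y ⁻¹' A) (x 0) ^ 2) * φ ((y, x 0), tailEuc x) j := rfl

lemma knotheSucc_le_add_smul_stdVec
    (hφ : ∀ p x j (t : ℝ), 0 ≤ t → φ (p, x) j ≤ φ (p, x + t • stdVec j) j)
    (y : Y) (x : Euc (n + 1)) (j : Fin (n + 1)) {t : ℝ} (ht : 0 ≤ t) :
    knotheSucc A φ (y, x) j ≤ knotheSucc A φ (y, x + t • stdVec j) j := by
  rw [← consEuc_tailEuc x]
  refine Fin.cases ?_ (fun j => ?_) j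
  · rw [consEuc_add_smul_stdVec_zero, knotheSucc_zero, knotheSucc_zero]
    exact monotone_headMap _ (by simpa using ht)
  · rw [consEuc_add_smul_stdVec_succ, knotheSucc_succ, knotheSucc_succ]
    simp only [consEuc_apply_zero, tailEuc_consEuc]
    exact mul_le_mul_of_nonneg_left (hφ _ _ _ _ ht) (Real.sqrt_nonneg _)

lemma norm_knotheSucc_le (hφ : ∀ p, ‖φ p‖ ≤ 1) (p : Y × Euc (n + 1)) :
    ‖knotheSucc A φ p‖ ≤ 1 := by
  rw [← sq_le_one_iff₀ (norm_nonneg _), norm_sq_eq_sq_add_norm_tailEuc_sq]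
  simp only [knotheSucc, consEuc_apply_zero, tailEuc_consEuc, norm_smul]
  have hT := headMap_mem (Prod.mk p.1 ⁻¹' A) (p.2 0)
  set T := headMap (Prod.mk p.1 ⁻¹' A) (p.2 0)
  have h1 : 0 ≤ 1 - T ^ 2 := by nlinarith [hT.1, hT.2]
  have h2 := (sq_le_one_iff₀ (norm_nonneg _)).2 (hφ ((p.1, p.2 0), tailEuc p.2))
  rw [mul_pow, Real.norm_eq_abs, sq_abs, Real.sq_sqrt h1]
  nlinarith

lemma lowerLineDeriv_comp_apply_zero {T : ℝ → ℝ} {d t : ℝ} (h : HasDerivAt T d t) (x : Euc n) :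
    lowerLineDeriv (fun z : Euc (n + 1) => T (z 0)) (stdVec 0) (consEuc n (t, x)) =
      ENNReal.ofReal d := by
  refine lowerLineDeriv_eq_of_hasLineDerivAt ?_
  simp only [HasLineDerivAt, consEuc_add_smul_stdVec_zero, consEuc_apply_zero]
  simpa using (show HasDerivAt T d (t + 0) by simpa using h).comp_const_add t 0

lemma lowerLineDeriv_knotheSucc_succ (y : Y) (t : ℝ) (x : Euc n) (j : Fin n) :
    lowerLineDeriv (fun x => knotheSucc A φ (y, x) j.succ) (stdVec j.succ) (consEuc n (t, x)) =
      ENNReal.ofReal √(1 - headMap (Prod.mk y ⁻¹' A) t ^ 2) *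
        lowerLineDeriv (fun x => φ ((y, t), x) j) (stdVec j) x := by
  rw [lowerLineDeriv, lowerLineDeriv, ← ENNReal.liminf_const_mul_of_ne_top ENNReal.ofReal_ne_top]
  congr 1 with k
  rw [consEuc_add_smul_stdVec_succ]
  simp only [knotheSucc_succ, consEuc_apply_zero, tailEuc_consEuc]
  rw [← ENNReal.ofReal_mul (Real.sqrt_nonneg _)]
  congr 1; ring

lemma prod_lowerLineDeriv_knotheSucc (y : Y) {t d : ℝ} (x : Euc n)
    (h : HasDerivAt (headMap (Prod.mk y ⁻¹' A)) d t) :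
    ∏ j, lowerLineDeriv (fun x => knotheSucc A φ (y, x) j) (stdVec j) (consEuc n (t, x)) =
      ENNReal.ofReal (d * capDensity n (headMap (Prod.mk y ⁻¹' A) t)) *
        ∏ j, lowerLineDeriv (fun x => φ ((y, t), x) j) (stdVec j) x := by
  rw [Fin.prod_univ_succ]
  simp_rw [lowerLineDeriv_knotheSucc_succ, knotheSucc_zero]
  rw [lowerLineDeriv_comp_apply_zero h, Finset.prod_mul_distrib, Finset.prod_const,
    Finset.card_univ, Fintype.card_fin, ← ENNReal.ofReal_pow (Real.sqrt_nonneg _),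
    ENNReal.ofReal_mul' (capDensity_nonneg n _), mul_assoc]
  rfl

lemma prod_lowerLineDeriv_knotheSucc_mul {y : Y} {t : ℝ} {x : Euc n} {v : ℝ≥0∞}
    (hy : volume (Prod.mk y ⁻¹' A) ≠ ⊤) (ht : sliceVol (Prod.mk y ⁻¹' A) t < ⊤)
    (hT : sliceVol (Prod.mk y ⁻¹' A) t ≠ 0 → ∃ d, HasDerivAt (headMap (Prod.mk y ⁻¹' A)) d t ∧
      d * capDensity n (headMap (Prod.mk y ⁻¹' A) t) * volume.real (Prod.mk y ⁻¹' A) =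
        capMass n * (sliceVol (Prod.mk y ⁻¹' A) t).toReal)
    (hv : v ≠ 0) (hx : (∏ j, lowerLineDeriv (fun x => φ ((y, t), x) j) (stdVec j) x) *
      sliceVol (Prod.mk y ⁻¹' A) t = v) :
    (∏ j, lowerLineDeriv (fun x => knotheSucc A φ (y, x) j) (stdVec j) (consEuc n (t, x))) *
      volume (Prod.mk y ⁻¹' A) = ENNReal.ofReal (capMass n) * v := by
  obtain ⟨d, hd, hdV⟩ := hT (right_ne_zero_of_mul (hx.trans_ne hv))
  rw [prod_lowerLineDeriv_knotheSucc y x hd, mul_right_comm, ← ENNReal.ofReal_toReal hy,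
    ← ENNReal.ofReal_mul' ENNReal.toReal_nonneg, ← measureReal_def, hdV,
    ENNReal.ofReal_mul (capMass_pos n).le, ENNReal.ofReal_toReal ht.ne, ← hx]
  ring

variable [MeasurableSpace Y]

lemma measurable_headMap_fibre (hA : MeasurableSet A) :
    Measurable fun p : Y × ℝ => headMap (Prod.mk p.1 ⁻¹' A) p.2 := by
  have hhead : Measurable fun p : Y × ℝ => headVol (Prod.mk p.1 ⁻¹' A) p.2 := by
    have hs : MeasurableSet {q : (Y × ℝ) × Euc (n + 1) | (q.1.1, q.2) ∈ A ∧ q.2 0 ≤ q.1.2} :=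
      (hA.preimage (by fun_prop : Measurable fun q : (Y × ℝ) × Euc (n + 1) => (q.1.1, q.2))).inter
        (measurableSet_le (by fun_prop : Measurable fun q : (Y × ℝ) × Euc (n + 1) => q.2 0)
          (by fun_prop))
    exact (measurable_measure_prodMk_left hs).ennreal_toReal
  have htotal : Measurable fun p : Y × ℝ => volume.real (Prod.mk p.1 ⁻¹' A) :=
    ((measurable_measure_prodMk_left hA).comp measurable_fst).ennreal_toReal
  exact (continuous_capQuantile n).measurable.comp (hhead.div htotal)

lemma measurable_knotheSucc (hA : MeasurableSet A) (hφ : Measurable φ) :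
    Measurable (knotheSucc A φ) := by
  have hzero : Measurable fun p : Y × Euc (n + 1) => (p.1, p.2 0) := by fun_prop
  have hT := (measurable_headMap_fibre hA).comp hzero
  have htail : Measurable fun p : Y × Euc (n + 1) => tailEuc p.2 :=
    measurable_tailEuc.comp measurable_snd
  exact (consEuc n).measurable.comp
    (hT.prodMk ((((hT.pow_const 2).const_sub 1).sqrt).smul (hφ.comp (hzero.prodMk htail))))

lemma ae_prod_lowerLineDeriv_knotheSucc_mul (hA : MeasurableSet A)
    (hφ : IsKnothe {q : (Y × ℝ) × Euc n | (q.1.1, consEuc n (q.1.2, q.2)) ∈ A} φ) (y : Y)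
    (hy : volume (Prod.mk y ⁻¹' A) ≠ ⊤) : ∀ᵐ x, (y, x) ∈ A →
    (∏ j, lowerLineDeriv (fun x => knotheSucc A φ (y, x) j) (stdVec j) x) *
      volume (Prod.mk y ⁻¹' A) = volume (ball (0 : Euc (n + 1)) 1) := by
  have hB : MeasurableSet (Prod.mk y ⁻¹' A) := measurable_prodMk_left hA
  have hmeas : Measurable fun x => knotheSucc A φ (y, x) :=
    (measurable_knotheSucc hA hφ.measurable).comp measurable_prodMk_left
  have hset : MeasurableSet {x | (y, x) ∈ A →
      (∏ j, lowerLineDeriv (fun x => knotheSucc A φ (y, x) j) (stdVec j) x) *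
        volume (Prod.mk y ⁻¹' A) = volume (ball (0 : Euc (n + 1)) 1)} := by
    simp_rw [imp_iff_not_or]
    exact hB.compl.union (measurableSet_eq_fun ((Finset.univ.measurable_fun_prod fun j _ =>
      measurable_lowerLineDeriv (by fun_prop) (stdVec j)).mul_const _) measurable_const)
  refine (ae_mem_iff_ae_ae_consEuc_mem hset).2 ?_
  filter_upwards [ae_hasDerivAt_headMap hB hy] with t ⟨ht, hT⟩
  filter_upwards [hφ.det (y, t) ht.ne] with x hx hxA
  rw [volume_unitBall_succ]
  exact prod_lowerLineDeriv_knotheSucc_mul hy ht (fun h0 => (hT h0).2)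
    (measure_ball_pos volume _ one_pos).ne' (hx hxA)

lemma isKnothe_knotheSucc (hA : MeasurableSet A)
    (hφ : IsKnothe {q : (Y × ℝ) × Euc n | (q.1.1, consEuc n (q.1.2, q.2)) ∈ A} φ) :
    IsKnothe A (knotheSucc A φ) where
  measurable := measurable_knotheSucc hA hφ.measurable
  norm_le := norm_knotheSucc_le hφ.norm_le
  mono y x j _ ht := knotheSucc_le_add_smul_stdVec hφ.mono y x j ht
  det := ae_prod_lowerLineDeriv_knotheSucc_mul hA hφ

lemma isKnothe_zero {A : Set (Y × Euc 0)} : IsKnothe A fun _ => 0 where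
  measurable := measurable_const
  norm_le _ := by simp
  mono _ _ j := j.elim0
  det y _ := Eventually.of_forall fun x hx => by
    have hfibre : Prod.mk y ⁻¹' A = univ := Subsingleton.eq_univ_of_nonempty ⟨x, hx⟩
    have hball : ball (0 : Euc 0) 1 = univ :=
      Subsingleton.eq_univ_of_nonempty ⟨0, mem_ball_self one_pos⟩
    simp [hfibre, hball]

lemma measurableSet_consEuc_fibre (hA : MeasurableSet A) :
    MeasurableSet {q : (Y × ℝ) × Euc n | (q.1.1, consEuc n (q.1.2, q.2)) ∈ A} :=
  hA.preimage ((measurable_fst.comp measurable_fst).prodMk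
    ((consEuc n).measurable.comp (by fun_prop)))

lemma exists_isKnothe {n : ℕ} {Y : Type*} [MeasurableSpace Y] {A : Set (Y × Euc n)}
    (hA : MeasurableSet A) : ∃ φ, IsKnothe A φ := by
  induction n generalizing Y with
  | zero => exact ⟨_, isKnothe_zero⟩
  | succ n ih =>
    obtain ⟨φ, hφ⟩ := ih (measurableSet_consEuc_fibre hA)
    exact ⟨_, isKnothe_knotheSucc hA hφ⟩

lemma exists_isKnothe_apply_zero_eq_headMap {A : Set (Y × Euc (n + 1))} (hA : MeasurableSet A) :
    ∃ φ, IsKnothe A φ ∧ ∀ y x, φ (y, x) 0 = headMap (Prod.mk y ⁻¹' A) (x 0) := by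
  obtain ⟨φ, hφ⟩ := exists_isKnothe (measurableSet_consEuc_fibre hA)
  exact ⟨_, isKnothe_knotheSucc hA hφ, knotheSucc_zero⟩

end Knothe

section ArithmeticGeometricMean

variable {ι : Type*} [Fintype ι] {a : ι → ℝ≥0∞}

lemma card_lt_sum_of_prod_eq_one (h : ∏ i, a i = 1) {i : ι} (hi : a i ≠ 1) :
    (Fintype.card ι : ℝ≥0∞) < ∑ i, a i := by
  by_cases htop : ∃ i, a i = ⊤
  · have hs : ∑ i, a i = ⊤ := ENNReal.sum_eq_top.2 (by simpa using htop)
    simp [hs]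
  push Not at htop
  lift a to ι → ℝ≥0 using htop
  beta_reduce at h hi ⊢
  have hprod : ∏ i, (a i : ℝ) = 1 := by exact_mod_cast h
  have hne : ∀ i, (a i : ℝ) ≠ 0 := fun i => Finset.prod_ne_zero_iff.1 (hprod.trans_ne one_ne_zero)
    i (Finset.mem_univ i)
  have hpos : ∀ i, 0 < (a i : ℝ) := fun i => (a i).2.lt_of_ne' (hne i)
  have hlog : ∑ i, Real.log (a i) < ∑ i, ((a i : ℝ) - 1) :=
    Finset.sum_lt_sum (fun i _ => Real.log_le_sub_one_of_pos (hpos i))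
      ⟨i, Finset.mem_univ i, Real.log_lt_sub_one_of_pos (hpos i) (by exact_mod_cast hi)⟩
  rw [← Real.log_prod fun i _ => hne i, hprod, Real.log_one, Finset.sum_sub_distrib,
    Finset.sum_const, Finset.card_univ, nsmul_one, sub_pos] at hlog
  exact_mod_cast hlog

lemma card_le_sum_of_prod_eq_one (h : ∏ i, a i = 1) : (Fintype.card ι : ℝ≥0∞) ≤ ∑ i, a i := by
  by_cases hone : ∀ i, a i = 1
  · simp [hone]
  · obtain ⟨i, hi⟩ := not_forall.1 hone
    exact (card_lt_sum_of_prod_eq_one h hi).le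

end ArithmeticGeometricMean

section IsoperimetricInequality

section Coordinates

variable {m : ℕ} {Ω : Set (Euc (m + 1))} {R : ℝ}

lemma volume_ball_eq_ofReal_pow_mul (hR : 0 < R) :
    volume (ball (0 : Euc m) R) = ENNReal.ofReal R ^ m * volume (ball (0 : Euc m) 1) := by
  rw [Measure.addHaar_ball_of_pos volume _ hR, ENNReal.ofReal_pow hR.le, finrank_euclideanSpace_fin]

/-- The functions `a j` are the diagonal entries of the Jacobian of the Knothe map of `Ω` onto the
ball of the same volume. -/
lemma exists_jacobian_entries (hop : IsOpen Ω) (hbd : Bornology.IsBounded Ω) (hR : 0 < R)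
    (hvol : volume Ω = volume (ball (0 : Euc (m + 1)) R)) :
    ∃ a : Fin (m + 1) → Euc (m + 1) → ℝ≥0∞, (∀ j, Measurable (a j)) ∧
      (∀ᵐ x ∂volume.restrict Ω, ∏ j, a j x = 1) ∧
      ∫⁻ x in Ω, ∑ j, a j x ≤ ENNReal.ofReal R * μHE[m] (frontier Ω) ∧
      ∀ t x d, HasDerivAt (headMap Ω) d t → a 0 (consEuc m (t, x)) = ENNReal.ofReal (R * d) := by
  obtain ⟨φ, hφ, hhead⟩ :=
    exists_isKnothe_apply_zero_eq_headMap (Y := Unit) (measurable_snd hop.measurableSet)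
  let f : Euc (m + 1) → Euc (m + 1) := fun x => φ ((), x)
  have hf : Measurable f := hφ.measurable.comp measurable_prodMk_left
  refine ⟨fun j x => ENNReal.ofReal R * lowerLineDeriv (fun x => f x j) (stdVec j) x,
    fun j => (measurable_lowerLineDeriv (by fun_prop) _).const_mul _, ?_, ?_, fun t x d hd => ?_⟩
  · rw [ae_restrict_iff' hop.measurableSet]
    filter_upwards [hφ.det () (hvol ▸ measure_ball_lt_top.ne)] with x hx hxΩ
    have hdet := hx hxΩ
    change _ * volume Ω = _ at hdet
    rw [hvol, volume_ball_eq_ofReal_pow_mul hR, ← mul_assoc] at hdet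
    rw [Finset.prod_mul_distrib, Finset.prod_const, Finset.card_univ, Fintype.card_fin, mul_comm]
    exact (ENNReal.mul_left_inj (measure_ball_pos _ _ one_pos).ne' measure_ball_lt_top.ne).1
      (hdet.trans (one_mul _).symm)
  · have hdiv := setLIntegral_sum_lowerLineDeriv_le hop hbd (EuclideanSpace.basisFun _ ℝ) hf
      (fun x => hφ.norm_le _) fun j x t ht => by
        simpa [EuclideanSpace.inner_single_left] using hφ.mono () x j t ht
    simp only [EuclideanSpace.basisFun_apply, EuclideanSpace.inner_single_left, map_one, one_mul,
      finrank_euclideanSpace_fin, Nat.add_sub_cancel] at hdiv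
    simp_rw [← Finset.mul_sum]
    rw [lintegral_const_mul' _ _ ENNReal.ofReal_ne_top]
    gcongr
  · have hzero : (fun x => f x 0) = fun z => headMap Ω (z 0) := funext fun z => hhead () z
    beta_reduce
    rw [hzero, lowerLineDeriv_comp_apply_zero hd, ENNReal.ofReal_mul hR.le]

lemma succ_mul_volume_le_mul_area (hop : IsOpen Ω) (hbd : Bornology.IsBounded Ω) (hR : 0 < R)
    (hvol : volume Ω = volume (ball (0 : Euc (m + 1)) R)) :
    ((m + 1 : ℕ) : ℝ≥0∞) * volume Ω ≤ ENNReal.ofReal R * μHE[m] (frontier Ω) := by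
  obtain ⟨a, -, hprod, harea, -⟩ := exists_jacobian_entries hop hbd hR hvol
  calc ((m + 1 : ℕ) : ℝ≥0∞) * volume Ω = ∫⁻ _ in Ω, ((m + 1 : ℕ) : ℝ≥0∞) := by simp
    _ ≤ ∫⁻ x in Ω, ∑ j, a j x := lintegral_mono_ae <| hprod.mono fun x hx => by
        simpa using card_le_sum_of_prod_eq_one hx
    _ ≤ ENNReal.ofReal R * μHE[m] (frontier Ω) := harea

end Coordinates

section Space

variable {E : Type*} [NormedAddCommGroup E] [InnerProductSpace ℝ E] [FiniteDimensional ℝ E]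
  [MeasurableSpace E] [BorelSpace E] {Ω : Set E} {R : ℝ}

theorem finrank_mul_volume_le_mul_area (hop : IsOpen Ω) (hbd : Bornology.IsBounded Ω) (hR : 0 < R)
    (hvol : volume Ω = volume (ball (0 : E) R)) :
    (finrank ℝ E : ℝ≥0∞) * volume Ω ≤
      ENNReal.ofReal R * μHE[finrank ℝ E - 1] (frontier Ω) := by
  rcases subsingleton_or_nontrivial E with hE | hE
  · simp [finrank_zero_of_subsingleton]
  obtain ⟨v, hv⟩ := exists_norm_eq E zero_le_one
  obtain ⟨L, -⟩ := exists_linearIsometryEquiv_stdVec_zero hv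
  have hdim := finrank_sub_one_add_one_of_norm_eq_one hv
  have h := succ_mul_volume_le_mul_area (Ω := L ⁻¹' Ω) (hop.preimage L.continuous)
    (L.antilipschitz.isBounded_preimage hbd) hR (by
      rw [volume_linearIsometryEquiv_preimage, hvol, ← volume_linearIsometryEquiv_preimage L,
        L.preimage_ball, map_zero])
  rwa [volume_linearIsometryEquiv_preimage,
    euclideanHausdorffMeasure_frontier_linearIsometryEquiv_preimage, hdim] at h

lemma exists_ball_volume_eq [Nontrivial E] {v : ℝ≥0∞} (h0 : v ≠ 0)
    (hlt : v < volume (ball (0 : E) R)) :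
    ∃ ρ : ℝ, 0 < ρ ∧ ρ < R ∧ v = volume (ball (0 : E) ρ) := by
  set ω := volume (ball (0 : E) 1)
  have hω0 : ω ≠ 0 := (measure_ball_pos _ _ one_pos).ne'
  have hωt : ω ≠ ⊤ := measure_ball_lt_top.ne
  have hq : v / ω ≠ ⊤ := ENNReal.div_ne_top hlt.ne_top hω0
  have hq0 : 0 < (v / ω).toReal := ENNReal.toReal_pos (ENNReal.div_ne_zero.2 ⟨h0, hωt⟩) hq
  set ρ := (v / ω).toReal ^ (finrank ℝ E : ℝ)⁻¹ with hρ
  have hρ0 : 0 < ρ := Real.rpow_pos_of_pos hq0 _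
  have hv : v = volume (ball (0 : E) ρ) := by
    rw [Measure.addHaar_ball_of_pos volume _ hρ0, hρ,
      Real.rpow_inv_natCast_pow hq0.le finrank_pos.ne', ENNReal.ofReal_toReal hq,
      ENNReal.div_mul_cancel hω0 hωt]
  refine ⟨ρ, hρ0, ?_, hv⟩
  by_contra! hle
  exact absurd (measure_mono (ball_subset_ball hle)) (not_le.2 (hv ▸ hlt))

lemma finrank_mul_volume_lt_mul_area [Nontrivial E] (hop : IsOpen Ω) (hbd : Bornology.IsBounded Ω)
    (h0 : volume Ω ≠ 0) (hlt : volume Ω < volume (ball (0 : E) R))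
    (hfin : μHE[finrank ℝ E - 1] (frontier Ω) ≠ ⊤) :
    (finrank ℝ E : ℝ≥0∞) * volume Ω <
      ENNReal.ofReal R * μHE[finrank ℝ E - 1] (frontier Ω) := by
  obtain ⟨ρ, hρ, hρR, hv⟩ := exists_ball_volume_eq h0 hlt
  have hle := finrank_mul_volume_le_mul_area hop hbd hρ hv
  have harea : μHE[finrank ℝ E - 1] (frontier Ω) ≠ 0 := fun hz => by
    rw [hz, mul_zero, nonpos_iff_eq_zero, mul_eq_zero] at hle
    exact hle.elim (by simp [finrank_pos.ne']) h0
  refine hle.trans_lt ((ENNReal.mul_lt_mul_iff_left harea hfin).2 ?_)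
  exact (ENNReal.ofReal_lt_ofReal_iff (hρ.trans hρR)).2 hρR

end Space

end IsoperimetricInequality

section EqualityCase

variable {E : Type*} [NormedAddCommGroup E] [InnerProductSpace ℝ E] [FiniteDimensional ℝ E]
  [MeasurableSpace E] [BorelSpace E]

/-- A bounded open set attaining equality in the isoperimetric inequality, where `R` is the radius
of the ball of the same volume. -/
structure IsIsoperimetric (Ω : Set E) (R : ℝ) : Prop where
  isOpen : IsOpen Ω
  isBounded : Bornology.IsBounded Ω
  radius_pos : 0 < R
  volume_eq : volume Ω = volume (ball (0 : E) R)
  area_le : ENNReal.ofReal R * μHE[finrank ℝ E - 1] (frontier Ω) ≤ finrank ℝ E * volume Ω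

namespace IsIsoperimetric

section Separation

variable {Ω : Set E} {R : ℝ}

lemma volume_ne_top (h : IsIsoperimetric Ω R) : volume Ω ≠ ⊤ :=
  h.volume_eq ▸ measure_ball_lt_top.ne

lemma volume_ne_zero (h : IsIsoperimetric Ω R) : volume Ω ≠ 0 :=
  h.volume_eq ▸ (measure_ball_pos _ _ h.radius_pos).ne'

lemma area_ne_top (h : IsIsoperimetric Ω R) : μHE[finrank ℝ E - 1] (frontier Ω) ≠ ⊤ := by
  intro htop
  have hle := h.area_le
  rw [htop, ENNReal.mul_top (ENNReal.ofReal_pos.2 h.radius_pos).ne', top_le_iff] at hle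
  exact ENNReal.mul_ne_top (ENNReal.natCast_ne_top _) h.volume_ne_top hle

lemma preimage {F : Type*} [NormedAddCommGroup F] [InnerProductSpace ℝ F] [FiniteDimensional ℝ F]
    [MeasurableSpace F] [BorelSpace F] (h : IsIsoperimetric Ω R) (L : F ≃ₗᵢ[ℝ] E) :
    IsIsoperimetric (L ⁻¹' Ω) R where
  isOpen := h.isOpen.preimage L.continuous
  isBounded := L.antilipschitz.isBounded_preimage h.isBounded
  radius_pos := h.radius_pos
  volume_eq := by
    rw [volume_linearIsometryEquiv_preimage, h.volume_eq, ← volume_linearIsometryEquiv_preimage L,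
      L.preimage_ball, map_zero]
  area_le := by
    rw [volume_linearIsometryEquiv_preimage, L.toLinearEquiv.finrank_eq,
      euclideanHausdorffMeasure_frontier_linearIsometryEquiv_preimage]
    exact h.area_le

lemma area_lt_add_of_subset_union [Nontrivial E] (h : IsIsoperimetric Ω R) {U V : Set E}
    (hU : IsOpen U) (hV : IsOpen V) (hdisj : Disjoint U V) (hcover : Ω ⊆ U ∪ V)
    (hU0 : volume (Ω ∩ U) ≠ 0) (hV0 : volume (Ω ∩ V) ≠ 0) :
    μHE[finrank ℝ E - 1] (frontier Ω) <
      μHE[finrank ℝ E - 1] (frontier (Ω ∩ U)) + μHE[finrank ℝ E - 1] (frontier (Ω ∩ V)) := by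
  have hsplit : volume (Ω ∩ U) + volume (Ω ∩ V) = volume Ω := by
    rw [← measure_union (hdisj.mono inter_subset_right inter_subset_right)
      (h.isOpen.inter hV).measurableSet, ← inter_union_distrib_left, inter_eq_left.2 hcover]
  have hUt : volume (Ω ∩ U) ≠ ⊤ := measure_ne_top_of_subset inter_subset_left h.volume_ne_top
  have hVt : volume (Ω ∩ V) ≠ ⊤ := measure_ne_top_of_subset inter_subset_left h.volume_ne_top
  by_contra! hle
  have hltU := finrank_mul_volume_lt_mul_area (h.isOpen.inter hU)
    (h.isBounded.subset inter_subset_left) hU0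
    (by rw [← h.volume_eq, ← hsplit]; exact ENNReal.lt_add_right hUt hV0)
    (ne_top_of_le_ne_top h.area_ne_top (le_self_add.trans hle))
  have hltV := finrank_mul_volume_lt_mul_area (h.isOpen.inter hV)
    (h.isBounded.subset inter_subset_left) hV0
    (by rw [← h.volume_eq, ← hsplit, add_comm]; exact ENNReal.lt_add_right hVt hU0)
    (ne_top_of_le_ne_top h.area_ne_top (le_add_self.trans hle))
  have hlt := ENNReal.add_lt_add hltU hltV
  rw [← mul_add, ← mul_add, hsplit] at hlt
  exact absurd (hlt.trans_le ((mul_le_mul_right hle _).trans h.area_le)) (lt_irrefl _)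

end Separation

end IsIsoperimetric

lemma frontier_inter_subset_of_inter_subset {X : Type*} [TopologicalSpace X] {s U F : Set X}
    (hs : IsOpen s) (hU : IsOpen U) (hF : IsClosed F) (hUF : U ⊆ F) (hsF : s ∩ F ⊆ U) :
    frontier (s ∩ U) ⊆ frontier s ∩ F := by
  rw [(hs.inter hU).frontier_eq, hs.frontier_eq]
  rintro x ⟨hx, hxU⟩
  have hxF : x ∈ F := closure_minimal (inter_subset_right.trans hUF) hF hx
  exact ⟨⟨closure_mono inter_subset_left hx, fun hxs => hxU ⟨hxs, hsF ⟨hxs, hxF⟩⟩⟩, hxF⟩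

lemma measure_frontier_inter_lt_add_measure_frontier_inter_gt_le {X : Type*} [TopologicalSpace X]
    [MeasurableSpace X] [BorelSpace X] {μ : Measure X} {s : Set X} {g : X → ℝ} {c : ℝ}
    (hs : IsOpen s) (hg : Continuous g) (hne : ∀ x ∈ s, g x ≠ c)
    (hnull : μ.restrict (frontier s) {x | g x = c} = 0) :
    μ (frontier (s ∩ {x | g x < c})) + μ (frontier (s ∩ {x | c < g x})) ≤ μ (frontier s) := by
  have hle : IsClosed {x | g x ≤ c} := isClosed_le hg continuous_const
  have hge : IsClosed {x | c ≤ g x} := isClosed_le continuous_const hg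
  have hbelow : frontier (s ∩ {x | g x < c}) ⊆ frontier s ∩ {x | g x ≤ c} :=
    frontier_inter_subset_of_inter_subset hs (isOpen_lt hg continuous_const) hle
      (fun x (hx : g x < c) => hx.le) fun x hx => lt_of_le_of_ne hx.2 (hne x hx.1)
  have habove : frontier (s ∩ {x | c < g x}) ⊆ frontier s ∩ {x | c ≤ g x} :=
    frontier_inter_subset_of_inter_subset hs (isOpen_lt continuous_const hg) hge
      (fun x (hx : c < g x) => hx.le) fun x hx => lt_of_le_of_ne hx.2 (hne x hx.1).symm
  have hdisj : AEDisjoint (μ.restrict (frontier s)) {x | g x ≤ c} {x | c ≤ g x} :=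
    measure_mono_null (fun x hx => le_antisymm hx.1 hx.2) hnull
  calc μ (frontier (s ∩ {x | g x < c})) + μ (frontier (s ∩ {x | c < g x}))
      ≤ μ.restrict (frontier s) {x | g x ≤ c} + μ.restrict (frontier s) {x | c ≤ g x} := by
        rw [Measure.restrict_apply hle.measurableSet, Measure.restrict_apply hge.measurableSet,
          inter_comm _ (frontier s), inter_comm _ (frontier s)]
        exact add_le_add (measure_mono hbelow) (measure_mono habove)
    _ = μ.restrict (frontier s) ({x | g x ≤ c} ∪ {x | c ≤ g x}) :=
        (measure_union₀ hge.measurableSet.nullMeasurableSet hdisj).symm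
    _ ≤ μ (frontier s) := (measure_mono (subset_univ _)).trans_eq (Measure.restrict_apply_univ _)

namespace IsIsoperimetric

variable {Ω : Set E} {R : ℝ}

/- A level set missing `Ω` would split it into two pieces of smaller volume whose boundaries
together have at most the area of `∂Ω`. -/
lemma ae_exists_mem_eq [Nontrivial E] (h : IsIsoperimetric Ω R) {g : E → ℝ} (hg : Continuous g) :
    ∀ᵐ c, volume (Ω ∩ {x | g x ≤ c}) ≠ 0 → volume (Ω ∩ {x | c < g x}) ≠ 0 → ∃ x ∈ Ω, g x = c := by
  have : IsFiniteMeasure (μHE[finrank ℝ E - 1].restrict (frontier Ω)) :=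
    isFiniteMeasure_restrict.2 h.area_ne_top
  filter_upwards [(Measure.countable_meas_level_set_pos (μ := μHE[finrank ℝ E - 1].restrict
    (frontier Ω)) hg.measurable).ae_notMem volume] with c hc hbelow habove
  by_contra! hne
  have hlt : Ω ∩ {x | g x ≤ c} = Ω ∩ {x | g x < c} :=
    Set.ext fun x => and_congr_right fun hx => (hne x hx).le_iff_lt
  exact (h.area_lt_add_of_subset_union (isOpen_lt hg continuous_const)
    (isOpen_lt continuous_const hg) (Set.disjoint_left.2 fun x (hx : g x < c) => hx.not_gt)
    (fun x hx => lt_or_gt_of_ne (hne x hx)) (hlt ▸ hbelow) habove).not_ge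
    (measure_frontier_inter_lt_add_measure_frontier_inter_gt_le h.isOpen hg hne
      (nonpos_iff_eq_zero.1 (not_lt.1 hc)))

end IsIsoperimetric

section Heights

variable {m : ℕ} {B : Set (Euc (m + 1))} {t : ℝ}

lemma sliceVol_ne_zero_of_mem (hB : IsOpen B) {x : Euc (m + 1)} (hx : x ∈ B) :
    sliceVol B (x 0) ≠ 0 :=
  ((hB.preimage ((continuous_consEuc m).comp (Continuous.prodMk_right (x 0)))).measure_pos volume
    ⟨tailEuc x, by simpa using hx⟩).ne'

/-- The heights of hyperplanes cutting `B` into two parts of positive volume. -/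
def heightRange (B : Set (Euc (m + 1))) : Set ℝ := headVol B ⁻¹' Ioo 0 (volume.real B)

lemma isOpen_heightRange (hB : MeasurableSet B) (hfin : volume B ≠ ⊤) : IsOpen (heightRange B) :=
  isOpen_Ioo.preimage (continuous_headVol hB hfin)

lemma ordConnected_heightRange (hfin : volume B ≠ ⊤) : (heightRange B).OrdConnected :=
  ordConnected_Ioo.preimage_mono (monotone_headVol hfin)

lemma volume_real_inter_head_gt (hfin : volume B ≠ ⊤) (s : ℝ) :
    volume.real (B ∩ {x | s < x 0}) = volume.real B - headVol B s := by
  have hle : MeasurableSet {x : Euc (m + 1) | x 0 ≤ s} :=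
    (isClosed_le (by fun_prop) continuous_const).measurableSet
  have hdiff : B \ {x | x 0 ≤ s} = B ∩ {x | s < x 0} := by ext x; simp
  rw [headVol, ← measureReal_inter_add_sdiff hle hfin, hdiff, add_sub_cancel_left]

lemma volume_inter_head_le_ne_zero (ht : t ∈ heightRange B) : volume (B ∩ {x | x 0 ≤ t}) ≠ 0 :=
  fun hzero => ht.1.ne' (by rw [headVol, measureReal_def, hzero, ENNReal.toReal_zero])

lemma volume_inter_head_gt_ne_zero (hfin : volume B ≠ ⊤) (ht : t ∈ heightRange B) :
    volume (B ∩ {x | t < x 0}) ≠ 0 := fun hzero => by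
  have h := volume_real_inter_head_gt hfin t
  rw [measureReal_def, hzero, ENNReal.toReal_zero] at h
  linarith [ht.2]

lemma mem_heightRange_of_mem (hB : IsOpen B) (hfin : volume B ≠ ⊤) {x : Euc (m + 1)}
    (hx : x ∈ B) : x 0 ∈ heightRange B := by
  have hfin' (s : Set (Euc (m + 1))) : volume (B ∩ s) ≠ ⊤ :=
    measure_ne_top_of_subset inter_subset_left hfin
  obtain ⟨ε, hε, hball⟩ := Metric.isOpen_iff.1 hB x hx
  have hmem (s : ℝ) (hs : |s| < ε) : x + s • stdVec 0 ∈ B :=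
    hball (by simpa [norm_smul] using hs)
  have hpos {U : Set (Euc (m + 1))} (hU : IsOpen U) (hne : (B ∩ U).Nonempty) :
      0 < volume.real (B ∩ U) :=
    ENNReal.toReal_pos ((hB.inter hU).measure_pos volume hne).ne' (hfin' U)
  have hhead : Continuous fun y : Euc (m + 1) => y 0 := by fun_prop
  have hbelow := hpos (isOpen_lt hhead (continuous_const (y := x 0)))
    ⟨x + (-(ε / 2)) • stdVec 0, hmem _ (by rw [abs_neg, abs_of_pos] <;> linarith), by simp [hε]⟩
  have habove := hpos (isOpen_lt (continuous_const (y := x 0)) hhead)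
    ⟨x + (ε / 2) • stdVec 0, hmem _ (by rw [abs_of_pos] <;> linarith), by simp [hε]⟩
  rw [volume_real_inter_head_gt hfin] at habove
  refine ⟨hbelow.trans_le (measureReal_mono ?_ (hfin' _)), by linarith⟩
  exact inter_subset_inter_right _ fun y hy => (mem_ofPred.1 hy).le

lemma continuous_headMap (hB : MeasurableSet B) (hfin : volume B ≠ ⊤) : Continuous (headMap B) :=
  (continuous_capQuantile m).comp ((continuous_headVol hB hfin).div_const _)

lemma headMap_mem_Ioo (ht : t ∈ heightRange B) : headMap B t ∈ Ioo (-1 : ℝ) 1 :=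
  capQuantile_mem_Ioo m (headVol_div_mem_Ioo ht)

lemma mem_heightRange_of_headMap_mem (h0 : volume B ≠ 0) (hfin : volume B ≠ ⊤)
    (ht : headMap B t ∈ Ioo (-1 : ℝ) 1) : t ∈ heightRange B := by
  refine ⟨lt_of_le_of_ne (headVol_nonneg B t) fun h => ?_,
    lt_of_le_of_ne (headVol_le hfin t) fun h => ?_⟩
  · rw [headMap, ← h, zero_div, capQuantile_zero] at ht
    exact lt_irrefl _ ht.1
  · rw [headMap, h, div_self (measureReal_ne_zero_iff hfin |>.2 h0), capQuantile_one] at ht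
    exact lt_irrefl _ ht.2

lemma map_head_restrict (hB : MeasurableSet B) :
    Measure.map (fun x => x 0) (volume.restrict B) = volume.withDensity (sliceVol B) := by
  have hhead : Measurable fun x : Euc (m + 1) => x 0 := by fun_prop
  ext S hS
  rw [Measure.map_apply hhead hS, Measure.restrict_apply (hhead hS), withDensity_apply _ hS,
    setLIntegral_sliceVol hB hS, inter_comm]
  rfl

lemma setIntegral_comp_head (hB : MeasurableSet B) (hfin : volume B ≠ ⊤) {f : ℝ → ℝ}
    (hf : Continuous f) : ∫ x in B, f (x 0) = ∫ t, (sliceVol B t).toReal * f t := by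
  have hhead : Measurable fun x : Euc (m + 1) => x 0 := by fun_prop
  rw [← integral_map hhead.aemeasurable hf.aestronglyMeasurable, map_head_restrict hB,
    integral_withDensity_eq_integral_toReal_smul (measurable_sliceVol hB)
      (ae_sliceVol_lt_top hB hfin)]
  simp only [smul_eq_mul]

lemma integral_eq_zero_of_comp_sub_eq_neg {f : ℝ → ℝ} (c : ℝ) (hf : ∀ t, f (c - t) = -f t) :
    ∫ t, f t = 0 := by
  have h := integral_sub_left_eq_self f volume c
  simp_rw [hf, integral_neg] at h
  linarith

end Heights

namespace IsIsoperimetric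

variable {m : ℕ} {Ω : Set (Euc (m + 1))} {R : ℝ}

lemma ae_forall_hasDerivAt_headMap (h : IsIsoperimetric Ω R) :
    ∀ᵐ t, sliceVol Ω t ≠ 0 → ∀ d, HasDerivAt (headMap Ω) d t → R * d = 1 := by
  obtain ⟨a, hmeas, hprod, hle, hzero⟩ :=
    exists_jacobian_entries h.isOpen h.isBounded h.radius_pos h.volume_eq
  have hconst : ∫⁻ _ in Ω, ((m + 1 : ℕ) : ℝ≥0∞) = ((m + 1 : ℕ) : ℝ≥0∞) * volume Ω := by simp
  have hsum : ∀ᵐ x ∂volume.restrict Ω, ((m + 1 : ℕ) : ℝ≥0∞) = ∑ j, a j x := by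
    refine ae_eq_of_ae_le_of_lintegral_le (hprod.mono fun x hx => ?_) ?_
      (Finset.univ.measurable_fun_sum fun j _ => hmeas j).aemeasurable ?_
    · simpa using card_le_sum_of_prod_eq_one hx
    · rw [hconst]
      exact ENNReal.mul_ne_top (ENNReal.natCast_ne_top _) h.volume_ne_top
    · have harea := h.area_le
      rw [finrank_euclideanSpace_fin, Nat.add_sub_cancel] at harea
      exact hle.trans (harea.trans_eq hconst.symm)
  have hone : ∀ᵐ x, x ∈ {x | x ∈ Ω → a 0 x = 1} :=
    (ae_restrict_iff' h.isOpen.measurableSet).1 <| by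
      filter_upwards [hprod, hsum] with x hx hxs
      by_contra hne
      exact (card_lt_sum_of_prod_eq_one hx hne).ne (by simpa using hxs)
  have hset : MeasurableSet {x | x ∈ Ω → a 0 x = 1} := by
    simp_rw [imp_iff_not_or]
    exact h.isOpen.measurableSet.compl.union (hmeas 0 (measurableSet_singleton 1))
  filter_upwards [(ae_mem_iff_ae_ae_consEuc_mem hset).1 hone] with t ht h0 d hd
  obtain ⟨x, hxΩ, hx⟩ := ((frequently_ae_mem_iff.2 h0).and_eventually ht).exists
  have hentry := hx hxΩ
  rwa [hzero t x d hd, ENNReal.ofReal_eq_one] at hentry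

lemma ae_toReal_sliceVol_eq (h : IsIsoperimetric Ω R) :
    ∀ᵐ t, t ∈ heightRange Ω →
      (sliceVol Ω t).toReal = volume.real Ω / (R * capMass m) * capDensity m (headMap Ω t) := by
  filter_upwards [h.ae_forall_hasDerivAt_headMap,
    ae_hasDerivAt_headMap h.isOpen.measurableSet h.volume_ne_top,
    h.ae_exists_mem_eq (g := fun x => x 0) (by fun_prop)] with t hd hT hlevel ht
  obtain ⟨x, hx, rfl⟩ :=
    hlevel (volume_inter_head_le_ne_zero ht) (volume_inter_head_gt_ne_zero h.volume_ne_top ht)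
  have h0 := sliceVol_ne_zero_of_mem h.isOpen hx
  obtain ⟨-, d, hder, hdet⟩ := hT.2 h0
  have hslope := hd h0 d hder
  have hc := capMass_pos m
  have hR := h.radius_pos
  field_simp
  linear_combination R * -hdet + volume.real Ω * capDensity m (headMap Ω (x 0)) * hslope

lemma hasDerivAt_headVol (h : IsIsoperimetric Ω R) {t : ℝ} (ht : t ∈ heightRange Ω) :
    HasDerivAt (headVol Ω)
      (volume.real Ω / (R * capMass m) * capDensity m (headMap Ω t)) t := by
  have hΩ := h.isOpen.measurableSet
  let f : ℝ → ℝ := fun s => volume.real Ω / (R * capMass m) * capDensity m (headMap Ω s)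
  have hcont : Continuous f := continuous_const.mul
    ((continuous_capDensity m).comp (continuous_headMap hΩ h.volume_ne_top))
  refine ((intervalIntegral.integral_hasDerivAt_right (hcont.intervalIntegrable t t)
    (hcont.stronglyMeasurableAtFilter _ _) hcont.continuousAt).const_add
      (headVol Ω t)).congr_of_eventuallyEq ?_
  filter_upwards [(isOpen_heightRange hΩ h.volume_ne_top).mem_nhds ht] with s hs
  rw [← sub_eq_iff_eq_add', headVol_sub hΩ h.volume_ne_top]
  refine intervalIntegral.integral_congr_ae (h.ae_toReal_sliceVol_eq.mono fun u hu hmem => hu ?_)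
  exact (ordConnected_heightRange h.volume_ne_top).uIcc_subset ht hs (uIoc_subset_uIcc hmem)

lemma hasDerivAt_headMap (h : IsIsoperimetric Ω R) {t : ℝ} (ht : t ∈ heightRange Ω) :
    HasDerivAt (headMap Ω) R⁻¹ t := by
  refine (_root_.hasDerivAt_headMap ht (h.hasDerivAt_headVol ht)).congr_deriv ?_
  have hV : 0 < volume.real Ω := ht.1.trans ht.2
  have hdens := capDensity_pos m (headMap_mem_Ioo ht)
  have hc := capMass_pos m
  field_simp

lemma exists_headMap_eq_div (h : IsIsoperimetric Ω R) :
    ∃ a, ∀ t ∈ heightRange Ω, headMap Ω t = (t - a) / R := by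
  have hder (t : ℝ) (ht : t ∈ heightRange Ω) :
      HasDerivAt (fun t => headMap Ω t - t / R) 0 t := by
    simpa using (h.hasDerivAt_headMap ht).fun_sub ((hasDerivAt_id' t).div_const R)
  obtain ⟨b, hb⟩ :=
    (isOpen_heightRange h.isOpen.measurableSet h.volume_ne_top).exists_is_const_of_deriv_eq_zero
      (ordConnected_heightRange h.volume_ne_top).isPreconnected
      (fun t ht => (hder t ht).differentiableAt.differentiableWithinAt)
      fun t ht => (hder t ht).deriv
  refine ⟨-(R * b), fun t ht => ?_⟩
  have hR := h.radius_pos.ne'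
  have hbt := hb t ht
  field_simp at hbt ⊢
  linarith

lemma exists_heightRange_eq_ball (h : IsIsoperimetric Ω R) :
    ∃ a, heightRange Ω = ball a R ∧ ∀ t ∈ ball a R, headMap Ω t = (t - a) / R := by
  have hΩ := h.isOpen.measurableSet
  obtain ⟨a, ha⟩ := h.exists_headMap_eq_div
  have hball (t : ℝ) : (t - a) / R ∈ Ioo (-1 : ℝ) 1 ↔ t ∈ ball a R := by
    rw [mem_Ioo, ← abs_lt, abs_div, abs_of_pos h.radius_pos, div_lt_one h.radius_pos, mem_ball,
      Real.dist_eq]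
  have hsub : heightRange Ω ⊆ ball a R := fun t ht => (hball t).1 (ha t ht ▸ headMap_mem_Ioo ht)
  obtain ⟨x, hx⟩ := nonempty_of_measure_ne_zero h.volume_ne_zero
  have hx := mem_heightRange_of_mem h.isOpen h.volume_ne_top hx
  have hsup : ball a R ⊆ heightRange Ω := by
    refine (convex_ball a R).isPreconnected.subset_of_closure_inter_subset
      (isOpen_heightRange hΩ h.volume_ne_top) ⟨x 0, hsub hx, hx⟩ ?_
    rintro t ⟨ht, hta⟩
    have hclosure : EqOn (headMap Ω) (fun t => (t - a) / R) (closure (heightRange Ω)) :=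
      EqOn.closure ha (continuous_headMap hΩ h.volume_ne_top) (by fun_prop)
    exact mem_heightRange_of_headMap_mem h.volume_ne_zero h.volume_ne_top
      (hclosure ht ▸ (hball t).2 hta)
  exact ⟨a, hsub.antisymm hsup, fun t ht => ha t (hsup ht)⟩

lemma ae_toReal_sliceVol_eq_indicator (h : IsIsoperimetric Ω R) {a : ℝ}
    (hrange : heightRange Ω = ball a R) (hhead : ∀ t ∈ ball a R, headMap Ω t = (t - a) / R) :
    ∀ᵐ t, (sliceVol Ω t).toReal = (ball a R).indicator
      (fun t => volume.real Ω / (R * capMass m) * capDensity m ((t - a) / R)) t := by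
  filter_upwards [h.ae_toReal_sliceVol_eq] with t ht
  by_cases hta : t ∈ ball a R
  · rw [indicator_of_mem hta, ht (hrange ▸ hta), hhead t hta]
  · have hempty : {x : Euc m | consEuc m (t, x) ∈ Ω} = ∅ :=
      eq_empty_of_forall_notMem fun x hx =>
        hta (hrange ▸ mem_heightRange_of_mem h.isOpen h.volume_ne_top hx)
    rw [indicator_of_notMem hta, sliceVol, hempty, measure_empty, ENNReal.toReal_zero]

lemma exists_head_slab (h : IsIsoperimetric Ω R) :
    ∃ a, (∀ x ∈ Ω, |x 0 - a| < R) ∧ ∫ x in Ω, (x 0 - a) = 0 := by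
  obtain ⟨a, hrange, hhead⟩ := h.exists_heightRange_eq_ball
  refine ⟨a, fun x hx => ?_, ?_⟩
  · rw [← Real.dist_eq, ← mem_ball, ← hrange]
    exact mem_heightRange_of_mem h.isOpen h.volume_ne_top hx
  rw [setIntegral_comp_head (f := fun t => t - a) h.isOpen.measurableSet h.volume_ne_top
      (by fun_prop),
    integral_congr_ae ((h.ae_toReal_sliceVol_eq_indicator hrange hhead).mono fun t ht =>
      congrArg (· * (t - a)) ht)]
  refine integral_eq_zero_of_comp_sub_eq_neg (2 * a) fun t => ?_
  have hreflect : 2 * a - t ∈ ball a R ↔ t ∈ ball a R := by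
    rw [mem_ball, mem_ball, Real.dist_eq, Real.dist_eq, abs_sub_comm t a]
    ring_nf
  have hneg : (2 * a - t - a) / R = -((t - a) / R) := by ring
  by_cases ht : t ∈ ball a R
  · rw [indicator_of_mem ht, indicator_of_mem (hreflect.2 ht), hneg, capDensity_neg]
    ring
  · rw [indicator_of_notMem ht, indicator_of_notMem (mt hreflect.1 ht), zero_mul, zero_mul,
      neg_zero]

end IsIsoperimetric

namespace IsIsoperimetric

variable {Ω : Set E} {R : ℝ}

lemma exists_slab (h : IsIsoperimetric Ω R) {v : E} (hv : ‖v‖ = 1) :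
    ∃ a, (∀ x ∈ Ω, |⟪v, x⟫ - a| < R) ∧ ∫ x in Ω, (⟪v, x⟫ - a) = 0 := by
  obtain ⟨L, hL⟩ := exists_linearIsometryEquiv_stdVec_zero hv
  have hhead y : ⟪v, L y⟫ = y 0 := by
    rw [← hL, L.inner_map_map, EuclideanSpace.inner_single_left, map_one, one_mul]
  obtain ⟨a, hslab, hbary⟩ := (h.preimage L).exists_head_slab
  refine ⟨a, fun x hx => ?_, ?_⟩
  · obtain ⟨y, rfl⟩ := L.surjective x
    rw [hhead]
    exact hslab y hx
  · rw [← hbary, ← L.measurePreserving.setIntegral_preimage_emb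
      L.toMeasurableEquiv.measurableEmbedding]
    simp_rw [hhead]

lemma exists_subset_ball (h : IsIsoperimetric Ω R) : ∃ c, Ω ⊆ ball c R := by
  have hV : volume.real Ω ≠ 0 := (measureReal_ne_zero_iff h.volume_ne_top).2 h.volume_ne_zero
  obtain ⟨C, hC⟩ := h.isBounded.exists_norm_le
  have hint : IntegrableOn (fun x : E => x) Ω :=
    Measure.integrableOn_of_bounded h.volume_ne_top (by fun_prop)
      ((ae_restrict_iff' h.isOpen.measurableSet).2 (Eventually.of_forall hC))
  have hinner (w : E) : ⟪w, ⨍ x in Ω, x⟫ = (volume.real Ω)⁻¹ * ⟪w, ∫ x in Ω, x⟫ := by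
    rw [setAverage_eq, real_inner_smul_right]
  generalize ⨍ x in Ω, x = c at hinner
  refine ⟨c, fun x hx => ?_⟩
  rw [mem_ball, dist_eq_norm]
  rcases eq_or_ne (x - c) 0 with hxc | hxc
  · simpa [hxc] using h.radius_pos
  have hn : ‖x - c‖ ≠ 0 := norm_ne_zero_iff.2 hxc
  obtain ⟨a, hslab, hbary⟩ := h.exists_slab (v := ‖x - c‖⁻¹ • (x - c)) (norm_smul_inv_norm hxc)
  have ha : a = ⟪‖x - c‖⁻¹ • (x - c), c⟫ := by
    have hconst : IntegrableOn (fun _ => a) Ω := integrableOn_const h.volume_ne_top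
    rw [integral_sub (hint.const_inner (𝕜 := ℝ) _) hconst, integral_inner hint,
      setIntegral_const, smul_eq_mul, sub_eq_zero] at hbary
    rw [hinner, hbary, inv_mul_cancel_left₀ hV]
  have hx := hslab x hx
  rwa [ha, ← inner_sub_right, real_inner_smul_left, real_inner_self_eq_norm_sq, sq,
    inv_mul_cancel_left₀ hn, abs_norm] at hx

end IsIsoperimetric

end EqualityCase

section SphereArea

open NormedSpace (normalize)

section Gnomonic

variable {m : ℕ}

lemma dist_normalize_le {E : Type*} [NormedAddCommGroup E] [InnerProductSpace ℝ E] {u v : E}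
    (hu : 1 ≤ ‖u‖) (hv : 1 ≤ ‖v‖) : dist (normalize u) (normalize v) ≤ dist u v := by
  have hu0 : 0 < ‖u‖ := zero_lt_one.trans_le hu
  have hv0 : 0 < ‖v‖ := zero_lt_one.trans_le hv
  have hinner : ⟪u, v⟫ = ‖u‖ * ‖v‖ * ⟪normalize u, normalize v⟫ := by
    simp only [NormedSpace.normalize, real_inner_smul_left, real_inner_smul_right]
    field_simp
  have hle : ⟪normalize u, normalize v⟫ ≤ 1 := by
    simpa [NormedSpace.norm_normalize (norm_pos_iff.1 hu0),
      NormedSpace.norm_normalize (norm_pos_iff.1 hv0)] using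
      real_inner_le_norm (normalize u) (normalize v)
  rw [dist_eq_norm, dist_eq_norm]
  refine le_of_sq_le_sq ?_ (norm_nonneg _)
  rw [norm_sub_sq_real, norm_sub_sq_real, NormedSpace.norm_normalize (norm_pos_iff.1 hu0),
    NormedSpace.norm_normalize (norm_pos_iff.1 hv0), hinner]
  nlinarith [sq_nonneg (‖u‖ - ‖v‖), mul_nonneg
    (sub_nonneg.2 (one_le_mul_of_one_le_of_one_le hu hv)) (sub_nonneg.2 hle)]

lemma smul_consEuc (t : ℝ) (p : ℝ × Euc m) : t • consEuc m p = consEuc m (t • p) := by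
  ext j; refine Fin.cases ?_ (fun j => ?_) j <;> simp

lemma one_le_norm_consEuc_one (y : Euc m) : 1 ≤ ‖consEuc m (1, y)‖ := by
  have h := norm_sq_eq_sq_add_norm_tailEuc_sq (consEuc m (1, y))
  rw [consEuc_apply_zero, tailEuc_consEuc] at h
  nlinarith [norm_nonneg (consEuc m (1, y)), sq_nonneg ‖y‖]

/-- The inverse of the gnomonic projection: the central projection of the hyperplane at height one
onto the open upper unit hemisphere. -/
def gnomonicInv (y : Euc m) : Euc (m + 1) := normalize (consEuc m (1, y))

lemma gnomonicInv_apply_zero (y : Euc m) : gnomonicInv y 0 = ‖consEuc m (1, y)‖⁻¹ := by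
  simp [gnomonicInv, NormedSpace.normalize]

lemma gnomonicInv_inv_smul_tailEuc {x : Euc (m + 1)} (hx : ‖x‖ = 1) (hx0 : 0 < x 0) :
    gnomonicInv ((x 0)⁻¹ • tailEuc x) = x := by
  have hcons : consEuc m (1, (x 0)⁻¹ • tailEuc x) = (x 0)⁻¹ • x := by
    conv_rhs => rw [← consEuc_tailEuc x, smul_consEuc, Prod.smul_mk, smul_eq_mul]
    simp [hx0.ne']
  rw [gnomonicInv, hcons, NormedSpace.normalize_smul_of_pos (inv_pos.2 hx0),
    NormedSpace.normalize_eq_self_of_norm_eq_one hx]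

lemma lipschitzWith_gnomonicInv : LipschitzWith 1 (gnomonicInv : Euc m → Euc (m + 1)) := by
  refine LipschitzWith.of_dist_le_mul fun y z => ?_
  rw [NNReal.coe_one, one_mul]
  refine (dist_normalize_le (one_le_norm_consEuc_one y) (one_le_norm_consEuc_one z)).trans_eq ?_
  rw [dist_eq_norm, dist_eq_norm, ← sq_eq_sq₀ (norm_nonneg _) (norm_nonneg _),
    norm_sq_eq_sq_add_norm_tailEuc_sq, tailEuc_sub]
  simp

lemma euclideanHausdorffMeasure_le_volume_preimage_gnomonicInv {A : Set (Euc (m + 1))}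
    (hA : ∀ x ∈ A, ‖x‖ = 1 ∧ 0 < x 0) : μHE[m] A ≤ volume (gnomonicInv ⁻¹' A) := by
  have himage : A ⊆ gnomonicInv '' (gnomonicInv ⁻¹' A) := fun x hx =>
    have hinv := gnomonicInv_inv_smul_tailEuc (hA x hx).1 (hA x hx).2
    ⟨_, mem_preimage.2 (hinv.symm ▸ hx), hinv⟩
  rw [← EuclideanSpace.euclideanHausdorffMeasure_eq_volume]
  simpa using (measure_mono himage).trans
    (euclideanHausdorffMeasure_image_le_of_lipschitzWith lipschitzWith_gnomonicInv m _)

lemma ofReal_pow_mul_volume_preimage_gnomonicInv_le {A : Set (Euc (m + 1))} {c t : ℝ}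
    (hA : ∀ x ∈ A, c ≤ x 0) (ht : t ∈ Ioo 0 c) :
    ENNReal.ofReal (t ^ m) * volume (gnomonicInv ⁻¹' A) ≤ sliceVol (Ioo (0 : ℝ) 1 • A) t := by
  have hscale := Measure.addHaar_smul_of_nonneg (volume : Measure (Euc m)) ht.1.le
    (gnomonicInv ⁻¹' A)
  rw [finrank_euclideanSpace_fin] at hscale
  rw [← hscale]
  refine measure_mono ?_
  rintro _ ⟨y, hy, rfl⟩
  have hpos : 0 < ‖consEuc m (1, y)‖ := zero_lt_one.trans_le (one_le_norm_consEuc_one y)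
  have hc : c ≤ ‖consEuc m (1, y)‖⁻¹ := gnomonicInv_apply_zero y ▸ hA _ hy
  refine ⟨t * ‖consEuc m (1, y)‖, ⟨mul_pos ht.1 hpos, ?_⟩, gnomonicInv y, hy, ?_⟩
  · rw [← lt_inv_mul_iff₀' hpos, mul_one]
    exact ht.2.trans_le hc
  · simp only [gnomonicInv]
    rw [mul_smul, NormedSpace.norm_smul_normalize, smul_consEuc, Prod.smul_mk, smul_eq_mul, mul_one]

lemma setLIntegral_le_volume_of_le_sliceVol {B : Set (Euc (m + 1))} {S : Set ℝ}
    (hS : MeasurableSet S) {f : ℝ → ℝ≥0∞} (hf : ∀ t ∈ S, f t ≤ sliceVol B t) :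
    ∫⁻ t in S, f t ≤ volume B := by
  have hB := measurableSet_toMeasurable volume B
  calc ∫⁻ t in S, f t ≤ ∫⁻ t in S, sliceVol (toMeasurable volume B) t :=
        setLIntegral_mono (measurable_sliceVol hB) fun t ht =>
          (hf t ht).trans (measure_mono fun _ hx => subset_toMeasurable volume B hx)
    _ ≤ volume B := by
        rw [setLIntegral_sliceVol hB hS, ← measure_toMeasurable B]
        exact measure_mono inter_subset_left

lemma setLIntegral_Ioo_ofReal_pow (m : ℕ) {c : ℝ} (hc : 0 ≤ c) :
    ∫⁻ t in Ioo 0 c, ENNReal.ofReal (t ^ m) = ENNReal.ofReal (c ^ (m + 1) / (m + 1)) := by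
  rw [setLIntegral_congr Ioo_ae_eq_Ioc, ← ofReal_integral_eq_lintegral_ofReal,
    ← intervalIntegral.integral_of_le hc, integral_pow]
  · simp
  · exact (intervalIntegrable_iff_integrableOn_Ioc_of_le hc).1
      ((continuous_pow m).intervalIntegrable _ _)
  · filter_upwards [ae_restrict_mem measurableSet_Ioc] with t ht using pow_nonneg ht.1.le m

lemma ofReal_pow_mul_euclideanHausdorffMeasure_le_of_le_apply_zero {A : Set (Euc (m + 1))} {c : ℝ}
    (hc : 0 < c) (hA : ∀ x ∈ A, ‖x‖ = 1 ∧ c ≤ x 0) :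
    ENNReal.ofReal (c ^ (m + 1)) * μHE[m] A ≤
      ((m + 1 : ℕ) : ℝ≥0∞) * volume (Ioo (0 : ℝ) 1 • A) := by
  calc ENNReal.ofReal (c ^ (m + 1)) * μHE[m] A
      ≤ ENNReal.ofReal (c ^ (m + 1)) * volume (gnomonicInv ⁻¹' A) := by
        gcongr
        exact euclideanHausdorffMeasure_le_volume_preimage_gnomonicInv fun x hx =>
          ⟨(hA x hx).1, hc.trans_le (hA x hx).2⟩
    _ = ((m + 1 : ℕ) : ℝ≥0∞) *
          ∫⁻ t in Ioo 0 c, ENNReal.ofReal (t ^ m) * volume (gnomonicInv ⁻¹' A) := by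
        rw [lintegral_mul_const _ (by fun_prop), setLIntegral_Ioo_ofReal_pow m hc.le, ← mul_assoc,
          ← ENNReal.ofReal_natCast, ← ENNReal.ofReal_mul (by positivity), Nat.cast_add_one,
          mul_div_cancel₀ _ (by positivity)]
    _ ≤ ((m + 1 : ℕ) : ℝ≥0∞) * volume (Ioo (0 : ℝ) 1 • A) := by
        gcongr
        exact setLIntegral_le_volume_of_le_sliceVol measurableSet_Ioo fun t ht =>
          ofReal_pow_mul_volume_preimage_gnomonicInv_le (fun x hx => (hA x hx).2) ht

end Gnomonic

lemma measure_le_of_forall_exists_isOpen {X : Type*} [TopologicalSpace X]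
    [SecondCountableTopology X] [MeasurableSpace X] [OpensMeasurableSpace X] {μ ν : Measure X}
    (h : ∀ x, ∃ U, IsOpen U ∧ x ∈ U ∧ ∀ s ⊆ U, MeasurableSet s → μ s ≤ ν s) : μ ≤ ν := by
  choose U hopen hmem hle using h
  rcases isEmpty_or_nonempty X with hX | hX
  · exact (Measure.eq_zero_of_isEmpty μ).trans_le (Measure.zero_le ν)
  obtain ⟨T, hT, hcover⟩ :=
    TopologicalSpace.countable_cover_nhds fun x => (hopen x).mem_nhds (hmem x)
  have hTne : T.Nonempty := by
    rw [nonempty_iff_ne_empty]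
    rintro rfl
    exact empty_ne_univ (by simpa using hcover)
  obtain ⟨p, rfl⟩ := hT.exists_eq_range hTne
  rw [biUnion_range] at hcover
  have hmeas := MeasurableSet.disjointed fun i => (hopen (p i)).measurableSet
  refine Measure.le_iff.2 fun s hs => ?_
  have hsplit : s = ⋃ i, s ∩ disjointed (U ∘ p) i := by
    rw [← inter_iUnion, iUnion_disjointed]
    exact (inter_eq_left.2 (hcover ▸ subset_univ s)).symm
  have hdisj : Pairwise (Function.onFun Disjoint fun i => s ∩ disjointed (U ∘ p) i) :=
    fun i j hij => (disjoint_disjointed (U ∘ p) hij).mono inter_subset_right inter_subset_right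
  rw [hsplit, measure_iUnion hdisj fun i => hs.inter (hmeas i),
    measure_iUnion hdisj fun i => hs.inter (hmeas i)]
  exact ENNReal.tsum_le_tsum fun i => hle (p i) _
    (inter_subset_right.trans (disjointed_subset (U ∘ p) i)) (hs.inter (hmeas i))

variable {E : Type*} [NormedAddCommGroup E] [InnerProductSpace ℝ E] [FiniteDimensional ℝ E]
  [MeasurableSpace E] [BorelSpace E]

lemma ofReal_pow_mul_euclideanHausdorffMeasure_le_of_le_inner {A : Set E} {c : ℝ} (hc : 0 < c)
    {p : E} (hp : ‖p‖ = 1) (hA : ∀ x ∈ A, ‖x‖ = 1 ∧ c ≤ ⟪p, x⟫) :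
    ENNReal.ofReal (c ^ finrank ℝ E) * μHE[finrank ℝ E - 1] A ≤
      finrank ℝ E * volume (Ioo (0 : ℝ) 1 • A) := by
  obtain ⟨L, hL⟩ := exists_linearIsometryEquiv_stdVec_zero hp
  have hpole := ofReal_pow_mul_euclideanHausdorffMeasure_le_of_le_apply_zero (A := L ⁻¹' A) hc
    fun x hx => by
      obtain ⟨hnorm, hcap⟩ := hA _ hx
      rw [← hL, L.inner_map_map, EuclideanSpace.inner_single_left, map_one, one_mul] at hcap
      exact ⟨L.norm_map x ▸ hnorm, hcap⟩
  have hcone : L '' (Ioo (0 : ℝ) 1 • (L ⁻¹' A)) = Ioo (0 : ℝ) 1 • A := by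
    rw [← image2_smul, image_image2_distrib_right fun t x => map_smul L t x,
      image_preimage_eq _ L.surjective, image2_smul]
  rwa [L.isometry.euclideanHausdorffMeasure_preimage, L.surjective.range_eq, inter_univ,
    ← volume_linearIsometryEquiv_image L, hcone, finrank_sub_one_add_one_of_norm_eq_one hp] at hpole

lemma ofReal_pow_smul_comap_euclideanHausdorffMeasure_le_toSphere {c : ℝ} (hc : c ∈ Ioo (0 : ℝ) 1) :
    ENNReal.ofReal (c ^ finrank ℝ E) •
      (μHE[finrank ℝ E - 1] : Measure E).comap ((↑) : sphere (0 : E) 1 → E) ≤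
      (volume : Measure E).toSphere := by
  refine measure_le_of_forall_exists_isOpen fun p => ⟨{x | c < ⟪(p : E), (x : E)⟫}, ?_, ?_, ?_⟩
  · exact isOpen_lt continuous_const (by fun_prop)
  · simpa using hc.2
  intro s hs hmeas
  rw [Measure.smul_apply, smul_eq_mul, Measure.toSphere_apply' _ hmeas,
    (MeasurableEmbedding.subtype_coe isClosed_sphere.measurableSet).comap_apply]
  refine ofReal_pow_mul_euclideanHausdorffMeasure_le_of_le_inner hc.1 (norm_eq_of_mem_sphere p) ?_
  rintro _ ⟨x, hx, rfl⟩
  exact ⟨norm_eq_of_mem_sphere x, (hs hx).le⟩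

lemma euclideanHausdorffMeasure_unitSphere_le :
    μHE[finrank ℝ E - 1] (sphere (0 : E) 1) ≤ finrank ℝ E * volume (ball (0 : E) 1) := by
  have hlim : Tendsto (fun c : ℝ => ENNReal.ofReal (c ^ finrank ℝ E) *
      μHE[finrank ℝ E - 1] (sphere (0 : E) 1)) (𝓝[<] 1)
      (𝓝 (ENNReal.ofReal (1 ^ finrank ℝ E) * μHE[finrank ℝ E - 1] (sphere (0 : E) 1))) := by
    refine ENNReal.Tendsto.mul_const (ENNReal.tendsto_ofReal ?_) (Or.inl (by simp))
    exact ((continuous_pow _).tendsto 1).mono_left nhdsWithin_le_nhds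
  rw [one_pow, ENNReal.ofReal_one, one_mul] at hlim
  refine le_of_tendsto hlim ?_
  filter_upwards [Ioo_mem_nhdsLT (zero_lt_one' ℝ)] with c hc
  have h := ofReal_pow_smul_comap_euclideanHausdorffMeasure_le_toSphere (E := E) hc univ
  rwa [Measure.smul_apply, smul_eq_mul, Measure.toSphere_apply_univ,
    (MeasurableEmbedding.subtype_coe isClosed_sphere.measurableSet).comap_apply, image_univ,
    Subtype.range_coe] at h

theorem ofReal_mul_euclideanHausdorffMeasure_sphere_le {r : ℝ} (hr : 0 < r) :
    ENNReal.ofReal r * μHE[finrank ℝ E - 1] (sphere (0 : E) r) ≤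
      finrank ℝ E * volume (ball (0 : E) r) := by
  rcases subsingleton_or_nontrivial E with hE | hE
  · simp [sphere_eq_empty_of_subsingleton hr.ne']
  have hscale : sphere (0 : E) r = r • sphere (0 : E) 1 := by
    rw [smul_sphere' hr.ne', smul_zero, mul_one, Real.norm_of_nonneg hr.le]
  calc ENNReal.ofReal r * μHE[finrank ℝ E - 1] (sphere (0 : E) r)
      = ENNReal.ofReal r ^ finrank ℝ E * μHE[finrank ℝ E - 1] (sphere (0 : E) 1) := by
        rw [hscale, Measure.euclideanHausdorffMeasure_smul₀ _ hr.ne', ENNReal.smul_def,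
          smul_eq_mul, ENNReal.coe_pow, ← enorm_eq_nnnorm, Real.enorm_of_nonneg hr.le, ← mul_assoc,
          mul_pow_sub_one finrank_pos.ne']
    _ ≤ ENNReal.ofReal r ^ finrank ℝ E * (finrank ℝ E * volume (ball (0 : E) 1)) := by
        gcongr
        exact euclideanHausdorffMeasure_unitSphere_le
    _ = finrank ℝ E * volume (ball (0 : E) r) := by
        rw [Measure.addHaar_ball_of_pos volume _ hr, ENNReal.ofReal_pow hr.le, mul_left_comm]

end SphereArea

lemma interior_closure_eq_ball_of_subset {E : Type*} [NormedAddCommGroup E] [NormedSpace ℝ E]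
    [MeasurableSpace E] [BorelSpace E] [FiniteDimensional ℝ E] {μ : Measure E} [μ.IsAddHaarMeasure]
    {Ω : Set E} {c : E} {r : ℝ} (hr : r ≠ 0) (hΩ : NullMeasurableSet Ω μ) (hsub : Ω ⊆ ball c r)
    (hle : μ (ball c r) ≤ μ Ω) : interior (closure Ω) = ball c r := by
  have hfin : μ Ω ≠ ⊤ := (measure_mono hsub).trans_lt measure_ball_lt_top |>.ne
  have hnull : μ (ball c r \ Ω) = 0 := by
    rw [measure_sdiff hsub hΩ hfin, tsub_eq_zero_of_le hle]
  have hball : ball c r ⊆ closure Ω := sdiff_eq_empty.1 <|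
    ((isOpen_ball.sdiff isClosed_closure).measure_eq_zero_iff μ).1
      (measure_mono_null (sdiff_subset_sdiff_right subset_closure) hnull)
  refine Subset.antisymm ?_ (interior_maximal hball isOpen_ball)
  rw [← interior_closedBall c hr]
  exact interior_mono ((closure_mono hsub).trans closure_ball_subset_closedBall)

end

theorem stokes_stmt_9_general {E : Type*} [NormedAddCommGroup E] [InnerProductSpace ℝ E]
    [FiniteDimensional ℝ E] [Nontrivial E] [MeasurableSpace E] [BorelSpace E] {r : ℝ} (hr : 0 < r)
    {Ω : Set E} (hbd : Bornology.IsBounded Ω) (hop : IsOpen Ω)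
    (hvol : volume Ω = volume (ball (0 : E) r))
    (harea : μH[(Module.finrank ℝ E : ℝ) - 1] (frontier Ω) ≤
      μH[(Module.finrank ℝ E : ℝ) - 1] (sphere (0 : E) r)) :
    ∃ c : E, interior (closure Ω) = ball c r := by
  rw [← Nat.cast_pred Module.finrank_pos] at harea
  have hmin : IsIsoperimetric Ω r :=
    { isOpen := hop
      isBounded := hbd
      radius_pos := hr
      volume_eq := hvol
      area_le := by
        rw [hvol]
        refine le_trans ?_ (ofReal_mul_euclideanHausdorffMeasure_sphere_le hr)
        simp only [Measure.euclideanHausdorffMeasure_def, Measure.smul_apply]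
        gcongr }
  obtain ⟨c, hsub⟩ := hmin.exists_subset_ball
  refine ⟨c, interior_closure_eq_ball_of_subset (μ := volume) hr.ne'
    hop.measurableSet.nullMeasurableSet hsub ?_⟩
  rw [hvol, Measure.addHaar_ball_center]

/-- A bounded open set `Ω ⊆ ℝⁿ` (equal to the interior of its closure) having the
volume of a ball of radius `r` and the boundary surface area ((n-1)-dimensional
Hausdorff measure) of a sphere of radius `r` must be a ball of radius `r`. -/
theorem stokes_stmt_9 (n : ℕ) (hn : 2 ≤ n) (r : ℝ) (hr : 0 < r)
    (Ω : Set (EuclideanSpace ℝ (Fin n)))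
    (hne : Ω.Nonempty) (hbd : Bornology.IsBounded Ω) (hop : IsOpen Ω)
    (hreg : Ω = interior (closure Ω))
    (hvol : volume Ω = volume (ball (0 : EuclideanSpace ℝ (Fin n)) r))
    (harea : μH[(n : ℝ) - 1] (frontier Ω)
      = μH[(n : ℝ) - 1] (sphere (0 : EuclideanSpace ℝ (Fin n)) r)) :
    ∃ c : EuclideanSpace ℝ (Fin n), Ω = ball c r := by
  have : Nonempty (Fin n) := ⟨⟨0, by omega⟩⟩
  obtain ⟨c, hc⟩ := stokes_stmt_9_general hr hbd hop hvol (by simpa using harea.le)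
  exact ⟨c, hreg.trans hc⟩
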